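/- arXiv:1312.3889 — 2 statements merged into one kernel-verified Lean document; each statement's English description precedes it below -/
import Mathlib

section
/- Let K be a finite field of characteristic p and let d be an integer with gcd(d, |K| − 1) = 1 that is nondegenerate over K. Then the set {W_{K,d}(a) : a ∈ K^×} has at least 3 elements. -/
open scoped BigOperators Classical

/-- The canonical additive character of a finite field `K` of characteristic `p`:
`ψ_K(x) = exp(2πi · Tr_{K/F_p}(x) / p)`, where `Tr_{K/F_p}` is the absolute trace. -/
noncomputable def canonicalAddChar (p : ℕ) [Fact p.Prime] (K : Type) [Field K] [Fintype K]
    [Algebra (ZMod p) K] (x : K) : ℂ :=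
  Complex.exp (2 * Real.pi * Complex.I * ((Algebra.trace (ZMod p) K x).val : ℂ) / (p : ℂ))

/-- The Weil sum `W_{K,d}(a) = ∑_{x ∈ K} ψ_K(x^d + a·x)`. -/
noncomputable def weilSum (p : ℕ) [Fact p.Prime] (K : Type) [Field K] [Fintype K]
    [Algebra (ZMod p) K] (d : ℤ) (a : K) : ℂ :=
  ∑ x : K, canonicalAddChar p K (x ^ d + a * x)

/-- The value set `{W_{K,d}(a) : a ∈ K^×}` of the Weil sum. -/
noncomputable def weilValues (p : ℕ) [Fact p.Prime] (K : Type) [Field K] [Fintype K]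
    [Algebra (ZMod p) K] (d : ℤ) : Set ℂ :=
  {w : ℂ | ∃ a : K, a ≠ 0 ∧ weilSum p K d a = w}

/-- `d` is degenerate over a finite field of order `q` and characteristic `p` if
`d ≡ p^j (mod q − 1)` for some nonnegative integer `j`. -/
def IsDegenerate (p : ℕ) (q : ℕ) (d : ℤ) : Prop :=
  ∃ j : ℕ, d ≡ (p : ℤ) ^ j [ZMOD (q : ℤ) - 1]

/-!
Write `q` for the order of `K` and `W` for the Weil sum. The map `x ↦ x ^ d` is a multiplicative
automorphism of `K`, so the Galois conjugation replacing `ψ` by `ψ ^ s` takes `W(a)` to `W(c a)` for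
some unit `c`. Suppose that `W` takes at most two values `A` and `B` on `Kˣ`. If some conjugation
moves a value, it exchanges `A` and `B`; summing `W(a) + W(c a) = A + B` over `a ≠ 0` gives
`(q - 1) (A + B) = 2 q`, and since `A + B` is an algebraic integer, `q ≤ 3`. Otherwise `A` and `B`
are rational integers. The moments `∑ W(a) = q` and `∑ W(a) ^ 2 = q ^ 2`, together with the bounds
`|A|, |B| < q`, which are strict because `d` is nondegenerate, then force `A (A - 1) = q`; as `A`
and `A - 1` are coprime and `q` is a prime power, `q = 2`. For `q ≤ 3` every exponent is degenerate.
-/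

section Arithmetic

theorem prime_pow_le_two_of_mul_sub_one_eq {p A : ℤ} {n : ℕ} (hp : Prime p)
    (h : A * (A - 1) = p ^ n) : p ^ n ≤ 2 := by
  by_contra! hgt
  rw [← h] at hgt
  have hA : A ≠ 0 := by rintro rfl; norm_num at hgt
  have hA' : A - 1 ≠ 0 := fun h0 => by norm_num [h0] at hgt
  by_cases hpA : p ∣ A
  · have hpA' : ¬ p ∣ A - 1 := fun h1 => hp.not_dvd_one (by simpa using dvd_sub hpA h1)
    have hdvd : A * (A - 1) ∣ A * 1 := by
      rw [mul_one]
      exact h ▸ hp.pow_dvd_of_dvd_mul_right n hpA' h.symm.dvd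
    have hunit : IsUnit (A - 1) := isUnit_of_dvd_one ((mul_dvd_mul_iff_left hA).1 hdvd)
    rcases Int.isUnit_iff.1 hunit with h1 | h1 <;> obtain rfl := sub_eq_iff_eq_add.1 h1 <;>
      norm_num at hgt
  · have hdvd : A * (A - 1) ∣ 1 * (A - 1) := by
      rw [one_mul]
      exact h ▸ hp.pow_dvd_of_dvd_mul_left n hpA h.symm.dvd
    have hunit : IsUnit A := isUnit_of_dvd_one ((mul_dvd_mul_iff_right hA').1 hdvd)
    rcases Int.isUnit_iff.1 hunit with rfl | rfl <;> norm_num at hgt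

theorem mul_sub_one_eq_of_sq_sub_add {q A B : ℤ} (hq : 2 ≤ q) (hA : |A| < q) (hB : |B| < q)
    (h : q ^ 2 - (A + B) * q + q * (A * B) = A * B) : A * (A - 1) = q := by
  obtain ⟨hA₁, hA₂⟩ := abs_lt.1 hA
  obtain ⟨hB₁, hB₂⟩ := abs_lt.1 hB
  obtain ⟨k, hprod⟩ : q ∣ A * B := ⟨q - (A + B) + A * B, by linarith⟩
  have hsum : A + B = q + (q - 1) * k := by
    refine mul_left_cancel₀ (by lia : q ≠ 0) ?_
    linear_combination -h + (q - 1) * hprod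
  have hminus : (q - A) * (q - B) = -(k * (q * (q - 2))) := by
    linear_combination hprod - q * hsum
  have hplus : (q + A) * (q + B) = (k + 2) * q ^ 2 := by
    linear_combination hprod + q * hsum
  have hk_neg : k < 0 := by
    have : 0 < (q - A) * (q - B) := mul_pos (by lia) (by lia)
    by_contra! hk
    have : 0 ≤ k * (q * (q - 2)) := mul_nonneg hk (mul_nonneg (by lia) (by lia))
    lia
  have hk_gt : 0 < k + 2 := by
    have : 0 < (q + A) * (q + B) := mul_pos (by lia) (by lia)
    exact pos_of_mul_pos_left (hplus ▸ this) (sq_nonneg q)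
  obtain rfl : k = -1 := by lia
  linear_combination A * hsum - hprod

end Arithmetic

section Fibers

variable {α β : Type*}

theorem three_le_ncard_range [Finite α] [Nonempty α] {g : α → β}
    (hg : ¬ ∃ a b, ∀ x, g x = g a ∨ g x = g b) : 3 ≤ (Set.range g).ncard := by
  push Not at hg
  obtain ⟨a⟩ := ‹Nonempty α›
  obtain ⟨b, hba, -⟩ := hg a a
  obtain ⟨c, hca, hcb⟩ := hg a b
  exact (Set.two_lt_ncard_iff (Set.finite_range g)).2
    ⟨g a, g b, g c, ⟨a, rfl⟩, ⟨b, rfl⟩, ⟨c, rfl⟩, hba.symm, hca.symm, hcb.symm⟩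

theorem add_comp_eq_of_two_valued [AddCommMagma β] {g : α → β} {A B : β}
    (hg : ∀ x, g x = A ∨ g x = B) {σ : α → α} (hσ : σ.Surjective)
    (hfib : ∀ x y, g x = g y → g (σ x) = g (σ y)) {x₀ : α} (hx₀ : g (σ x₀) ≠ g x₀) (x : α) :
    g x + g (σ x) = A + B := by
  -- The map induced by `σ` on the at most two values is onto, and not the identity: it swaps them.
  have hne : g (σ x) ≠ g x := by
    intro hx
    obtain ⟨y, hy⟩ := hσ x₀
    have := hfib x x₀
    have := hfib y x
    have := hfib y x₀
    grind
  have := add_comm A B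
  grind

end Fibers

section SumsOfRootsOfUnity

variable {ι : Type*} [Fintype ι]

theorem sum_pow_eq_sum_pow_of_coprime {L : Type*} [CommRing L] [IsDomain L] [CharZero L]
    {n : ℕ} [NeZero n] {ζ : L} (hζ : IsPrimitiveRoot ζ n) {u v : ι → L} (hu : ∀ i, u i ^ n = 1)
    (hv : ∀ i, v i ^ n = 1) (h : ∑ i, u i = ∑ i, v i) {s : ℕ} (hs : s.Coprime n) :
    ∑ i, u i ^ s = ∑ i, v i ^ s := by
  choose k _ hk using fun i => hζ.eq_pow_of_pow_eq_one (hu i)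
  choose l _ hl using fun i => hζ.eq_pow_of_pow_eq_one (hv i)
  let f : Polynomial ℤ := ∑ i, Polynomial.X ^ k i - ∑ i, Polynomial.X ^ l i
  have hf : ∀ t : ℕ, Polynomial.aeval (ζ ^ t) f = ∑ i, u i ^ t - ∑ i, v i ^ t := fun t => by
    simp only [f, map_sub, map_sum, map_pow, Polynomial.aeval_X, ← hk, ← hl, pow_right_comm ζ t]
  have hroot : Polynomial.aeval ζ f = 0 := by simpa [h] using hf 1
  have hdvd : minpoly ℤ (ζ ^ s) ∣ f :=
    hζ.minpoly_eq_pow_coprime hs ▸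
      minpoly.isIntegrallyClosed_dvd (hζ.isIntegral (NeZero.pos n)) hroot
  have hroot' : Polynomial.aeval (ζ ^ s) f = 0 :=
    Polynomial.aeval_eq_zero_of_dvd_aeval_eq_zero hdvd (minpoly.aeval ℤ (ζ ^ s))
  exact sub_eq_zero.1 (hf s ▸ hroot')

theorem isIntegral_sum_of_pow_eq_one {L : Type*} [CommRing L] {n : ℕ} (hn : 0 < n) {u : ι → L}
    (hu : ∀ i, u i ^ n = 1) : IsIntegral ℤ (∑ i, u i) :=
  IsIntegral.sum _ fun i _ => .of_pow hn (by rw [hu i]; exact isIntegral_one)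

theorem exists_eq_intCast_of_intCast_mul_eq {L : Type*} [Field L] [CharZero L] {z : L}
    (hz : IsIntegral ℤ z) {m n : ℤ} (hn : n ≠ 0) (h : n * z = m) : ∃ k : ℤ, z = k := by
  refine hz.exists_int_iff_exists_rat.1 ⟨m / n, ?_⟩
  push_cast
  rw [eq_div_iff (Int.cast_ne_zero.2 hn), mul_comm, h]

theorem sum_range_sum_pow {L : Type*} [CommRing L] [IsDomain L] [DecidableEq L] {n : ℕ}
    {u : ι → L} (hu : ∀ i, u i ^ n = 1) :
    ∑ s ∈ Finset.range n, ∑ i, u i ^ s = n * (Finset.univ.filter (u · = 1)).card := by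
  have hgeom : ∀ i, ∑ s ∈ Finset.range n, u i ^ s = if u i = 1 then (n : L) else 0 := fun i => by
    split_ifs with h
    · simp [h]
    · refine (mul_eq_zero.1 ?_).resolve_right (sub_ne_zero.2 h)
      rw [geom_sum_mul, hu i, sub_self]
  rw [Finset.sum_comm, Finset.sum_congr rfl fun i _ => hgeom i, ← Finset.sum_filter,
    Finset.sum_const, nsmul_eq_mul, mul_comm]

theorem exists_sum_eq_intCast_of_forall_coprime {L : Type*} [Field L] [CharZero L] {p : ℕ}
    (hp : p.Prime) {u : ι → L} (hu : ∀ i, u i ^ p = 1)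
    (h : ∀ s : ℕ, s.Coprime p → ∑ i, u i ^ s = ∑ i, u i) : ∃ k : ℤ, ∑ i, u i = k := by
  classical
  obtain ⟨r, rfl⟩ := Nat.exists_eq_add_of_le' hp.one_le
  have hconj : ∀ s ∈ Finset.range r, ∑ i, u i ^ (s + 1) = ∑ i, u i := fun s hs =>
    h _ (Nat.coprime_of_lt_prime s.succ_ne_zero (by simpa using hs) hp).symm
  have htrace := sum_range_sum_pow hu
  rw [Finset.sum_range_succ', Finset.sum_congr rfl hconj, Finset.sum_const] at htrace
  refine exists_eq_intCast_of_intCast_mul_eq (isIntegral_sum_of_pow_eq_one hp.pos hu) (n := r)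
    (m := (r + 1 : ℕ) * (Finset.univ.filter (u · = 1)).card - Fintype.card ι) ?_ ?_
  · have := hp.two_le
    lia
  · push_cast at htrace ⊢
    rw [← htrace]
    simp

theorem re_sum_lt_card {u : ι → ℂ} (hu : ∀ i, ‖u i‖ ≤ 1) {j : ι} (hj : u j ≠ 1) :
    (∑ i, u i).re < Fintype.card ι := by
  have hle : ∀ i, (u i).re ≤ 1 := fun i => (Complex.re_le_norm _).trans (hu i)
  have hlt : (u j).re < 1 := by
    refine (hle j).lt_of_ne fun hre => hj ?_
    have hnorm : (u j).re = ‖u j‖ := le_antisymm (Complex.re_le_norm _) (hre ▸ hu j)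
    rw [Complex.eq_re_of_ofReal_le (Complex.re_eq_norm.1 hnorm), hre, Complex.ofReal_one]
  calc (∑ i, u i).re = ∑ i, (u i).re := Complex.re_sum ..
    _ < ∑ _i : ι, 1 := Finset.sum_lt_sum (fun i _ => hle i) ⟨j, Finset.mem_univ j, hlt⟩
    _ = Fintype.card ι := by simp

theorem abs_lt_card_of_sum_eq_intCast {u : ι → ℂ} (hu : ∀ i, ‖u i‖ ≤ 1) {j k : ι}
    (hj : u j ≠ 1) (hk : u k ≠ -1) {A : ℤ} (hA : ∑ i, u i = A) : |A| < Fintype.card ι := by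
  have hupper := re_sum_lt_card hu hj
  have hlower := re_sum_lt_card (u := fun i => -u i) (by simpa using hu) (j := k)
    (by simpa [neg_eq_iff_eq_neg] using hk)
  rw [Finset.sum_neg_distrib, hA, ← Int.cast_neg, Complex.intCast_re] at hlower
  rw [hA, Complex.intCast_re] at hupper
  exact abs_lt.2 ⟨neg_lt.1 (by exact_mod_cast hlower), by exact_mod_cast hupper⟩

end SumsOfRootsOfUnity

section MulAut

theorem odd_mulEquiv {R : Type*} [Ring R] [NoZeroDivisors R] (f : R ≃* R) :
    Function.Odd f := by
  have hone : f (-1) = -1 := by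
    have hsq : f (-1) * f (-1) = 1 := by rw [← map_mul]; simp
    rcases mul_self_eq_one_iff.1 hsq with h | h
    · have : (-1 : R) = 1 := f.injective (h.trans (map_one f).symm)
      rw [h, this]
    · exact h
  intro x
  rw [← neg_one_mul, map_mul, hone, neg_one_mul]

theorem mulEquiv_apply_eq_self_of_card_le_three {K : Type*} [Field K] [Fintype K]
    (hK : Fintype.card K ≤ 3) (f : K ≃* K) (x : K) : f x = x := by
  rcases eq_or_ne x 0 with rfl | hx
  · exact map_zero f
  have hcard : Fintype.card K - 1 ∣ 2 := by
    have := Fintype.one_lt_card (α := K)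
    interval_cases Fintype.card K <;> norm_num
  have hsq : x ^ 2 = 1 := by
    obtain ⟨m, hm⟩ := hcard
    rw [hm, pow_mul, FiniteField.pow_card_sub_one_eq_one x hx, one_pow]
  rcases sq_eq_one_iff.1 hsq with rfl | rfl
  · exact map_one f
  · rw [odd_mulEquiv f, map_one]

end MulAut

section AddChar

theorem addChar_pow_char_eq_one {A M : Type*} [NonAssocSemiring A] [Monoid M] (p : ℕ) [CharP A p]
    (ψ : AddChar A M) (x : A) : ψ x ^ p = 1 := by
  rw [← AddChar.map_nsmul_eq_pow, nsmul_eq_mul, CharP.cast_eq_zero, zero_mul,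
    AddChar.map_zero_eq_one]

theorem map_add_of_forall_addChar_eq_one {A M : Type*} [CommRing A] [NoZeroDivisors A]
    [CommMonoid M] {ψ : AddChar A M} (hψ : ψ.IsPrimitive) {f : A ≃* A} {a : A}
    (h : ∀ x, ψ (f x + a * x) = 1) (x y : A) : f (x + y) = f x + f y := by
  by_contra hne
  refine hψ (sub_ne_zero.2 hne) ?_
  ext z
  obtain ⟨w, rfl⟩ := f.surjective z
  -- The terms linear in the argument cancel, leaving a sum of three values of `t ↦ f t + a * t`.
  have hsplit : (f (x + y) - (f x + f y)) * f w = (f (w * (x + y)) + a * (w * (x + y))) +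
      (f (-(w * x)) + a * -(w * x)) + (f (-(w * y)) + a * -(w * y)) := by
    simp only [odd_mulEquiv f _, map_mul]
    ring
  rw [AddChar.mulShift_apply, hsplit, AddChar.map_add_eq_mul, AddChar.map_add_eq_mul, h, h, h]
  simp

end AddChar

section WalshTransform

variable {A R : Type*} [CommRing A] [Fintype A] [CommRing R]

/-- The Walsh transform of `f : A → A` with respect to the additive character `ψ`. Taking `f` to be
a power map gives the Weil sums of binomials. -/
def walshTransform (ψ : AddChar A R) (f : A → A) (a : A) : R :=
  ∑ x, ψ (f x + a * x)

theorem isIntegral_walshTransform (ψ : AddChar A R) (f : A → A) (a : A) :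
    IsIntegral ℤ (walshTransform ψ f a) := by
  obtain ⟨p, _⟩ := CharP.exists A
  have hp : 0 < p := Nat.pos_of_ne_zero (CharP.char_ne_zero_of_finite A p)
  exact isIntegral_sum_of_pow_eq_one hp fun _ => addChar_pow_char_eq_one p ψ _

theorem sum_walshTransform [IsDomain R] {ψ : AddChar A R} (hψ : ψ.IsPrimitive) {f : A → A}
    (hf : f 0 = 0) : ∑ a, walshTransform ψ f a = Fintype.card A := by
  simp only [walshTransform, AddChar.map_add_eq_mul]
  rw [Finset.sum_comm]
  simp_rw [← Finset.mul_sum, AddChar.sum_mulShift _ hψ]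
  simp [hf]

theorem sum_walshTransform_sq [IsDomain R] {ψ : AddChar A R} (hψ : ψ.IsPrimitive) {f : A → A}
    (hf : Function.Odd f) : ∑ a, walshTransform ψ f a ^ 2 = (Fintype.card A : R) ^ 2 := by
  have hexpand : ∀ a, walshTransform ψ f a ^ 2 =
      ∑ x, ∑ y, ψ (f x + f y) * ψ (a * (x + y)) := fun a => by
    simp only [walshTransform, sq, Finset.sum_mul_sum, ← AddChar.map_add_eq_mul]
    refine Finset.sum_congr rfl fun x _ => Finset.sum_congr rfl fun y _ => congrArg ψ ?_
    ring
  have hinner : ∀ x, ∑ a, ∑ y, ψ (f x + f y) * ψ (a * (x + y)) = Fintype.card A := fun x => by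
    rw [Finset.sum_comm]
    simp_rw [← Finset.mul_sum, AddChar.sum_mulShift _ hψ, add_eq_zero_iff_neg_eq]
    simp [hf x]
  simp_rw [hexpand]
  rw [Finset.sum_comm, Finset.sum_congr rfl fun x _ => hinner x]
  simp [sq]

theorem walshTransform_zero_of_bijective [Nontrivial A] [IsDomain R] {ψ : AddChar A R}
    (hψ : ψ.IsPrimitive) {f : A → A} (hf : Function.Bijective f) : walshTransform ψ f 0 = 0 := by
  have hne : ψ ≠ 1 := ψ.mulShift_one ▸ hψ one_ne_zero
  simp only [walshTransform, zero_mul, add_zero]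
  rw [hf.sum_comp fun y => ψ y, AddChar.sum_eq_zero_of_ne_one hne]

variable {K : Type*} [Field K] [Fintype K]

theorem exists_unit_walshTransform_mulShift (ψ : AddChar K R) (f : K ≃* K) {b : K} (hb : b ≠ 0) :
    ∃ c : Kˣ, ∀ a, walshTransform (ψ.mulShift b) f a = walshTransform ψ f (c * a) := by
  have he : f.symm b ≠ 0 := by simpa using hb
  refine ⟨Units.mk0 (b / f.symm b) (div_ne_zero hb he), fun a => ?_⟩
  refine Fintype.sum_equiv (Equiv.mulLeft₀ (f.symm b) he) _ _ fun x => ?_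
  rw [AddChar.mulShift_apply, Equiv.mulLeft₀_apply, map_mul f, f.apply_symm_apply, Units.val_mk0]
  congr 1
  field_simp

theorem exists_unit_walshTransform_pow (p : ℕ) [hp : Fact p.Prime] [CharP K p] (ψ : AddChar K R)
    (f : K ≃* K) {s : ℕ} (hs : s.Coprime p) :
    ∃ c : Kˣ, ∀ a, walshTransform (ψ ^ s) f a = walshTransform ψ f (c * a) := by
  have hsK : (s : K) ≠ 0 := by
    rw [Ne, CharP.cast_eq_zero_iff K p]
    exact (Nat.Prime.coprime_iff_not_dvd hp.out).1 hs.symm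
  rw [AddChar.pow_mulShift]
  exact exists_unit_walshTransform_mulShift ψ f hsK

end WalshTransform

section ComplexWalshTransform

variable {A : Type*} [CommRing A] [Fintype A]

theorem abs_lt_card_of_walshTransform_eq_intCast {ψ : AddChar A ℂ} {f : A → A} (hf : f 0 = 0)
    {a x : A} (hx : ψ (f x + a * x) ≠ 1) {k : ℤ} (hk : walshTransform ψ f a = k) :
    |k| < Fintype.card A := by
  have hzero : ψ (f 0 + a * 0) ≠ -1 := by
    rw [hf, mul_zero, add_zero, AddChar.map_zero_eq_one]
    norm_num
  exact abs_lt_card_of_sum_eq_intCast (u := fun x => ψ (f x + a * x))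
    (fun _ => (ψ.norm_apply _).le) hx hzero hk

variable {p : ℕ} [CharP A p]

theorem walshTransform_pow_eq_of_eq [NeZero p] (ψ : AddChar A ℂ) (f : A → A) {a b : A}
    (h : walshTransform ψ f a = walshTransform ψ f b) {s : ℕ} (hs : s.Coprime p) :
    walshTransform (ψ ^ s) f a = walshTransform (ψ ^ s) f b :=
  sum_pow_eq_sum_pow_of_coprime (Complex.isPrimitiveRoot_exp p (NeZero.ne p))
    (fun _ => addChar_pow_char_eq_one p ψ _) (fun _ => addChar_pow_char_eq_one p ψ _) h hs

theorem exists_walshTransform_eq_intCast [Fact p.Prime] (ψ : AddChar A ℂ) (f : A → A) {a : A}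
    (h : ∀ s : ℕ, s.Coprime p → walshTransform (ψ ^ s) f a = walshTransform ψ f a) :
    ∃ k : ℤ, walshTransform ψ f a = k :=
  exists_sum_eq_intCast_of_forall_coprime Fact.out (fun _ => addChar_pow_char_eq_one p ψ _) h

end ComplexWalshTransform

section TwoValued

variable {K : Type*} [Field K] [Fintype K]

theorem card_sq_sub_add_of_two_valued {R : Type*} [CommRing R] [IsDomain R] {ψ : AddChar K R}
    (hψ : ψ.IsPrimitive) {f : K ≃* K} {A B : R}
    (hAB : ∀ u : Kˣ, walshTransform ψ f u = A ∨ walshTransform ψ f u = B) :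
    (Fintype.card K : R) ^ 2 - (A + B) * Fintype.card K + Fintype.card K * (A * B) = A * B := by
  have hzero := walshTransform_zero_of_bijective hψ f.bijective
  calc
    _ = ∑ a, (walshTransform ψ f a ^ 2 - (A + B) * walshTransform ψ f a + A * B) := by
      rw [Finset.sum_add_distrib, Finset.sum_sub_distrib, ← Finset.mul_sum,
        sum_walshTransform hψ (map_zero f), sum_walshTransform_sq hψ (odd_mulEquiv f)]
      simp
    _ = walshTransform ψ f 0 ^ 2 - (A + B) * walshTransform ψ f 0 + A * B := by
      refine Fintype.sum_eq_single 0 fun a ha => ?_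
      rcases hAB (Units.mk0 a ha) with h | h <;> rw [Units.val_mk0] at h <;> rw [h] <;> ring
    _ = A * B := by rw [hzero]; ring

theorem card_sub_one_mul_add_of_two_valued {R : Type*} [CommRing R] [IsDomain R]
    {ψ : AddChar K R} (hψ : ψ.IsPrimitive) {f : K ≃* K} {A B : R}
    (hAB : ∀ u : Kˣ, walshTransform ψ f u = A ∨ walshTransform ψ f u = B) {c : Kˣ}
    (hfib : ∀ u v : Kˣ, walshTransform ψ f u = walshTransform ψ f v →
      walshTransform ψ f (c * u) = walshTransform ψ f (c * v))
    {u₀ : Kˣ} (hu₀ : walshTransform ψ f (c * u₀) ≠ walshTransform ψ f u₀) :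
    ((Fintype.card K : R) - 1) * (A + B) = 2 * Fintype.card K := by
  have hzero := walshTransform_zero_of_bijective hψ f.bijective
  have hswap : ∀ u : Kˣ, walshTransform ψ f u + walshTransform ψ f (c * u) = A + B :=
    add_comp_eq_of_two_valued (g := fun u : Kˣ => walshTransform ψ f u) hAB
      (Group.mulLeft_bijective c).surjective hfib hu₀
  have hsum : ∑ a, walshTransform ψ f (c * a) = Fintype.card K := by
    rw [← sum_walshTransform hψ (map_zero f)]
    exact Equiv.sum_comp (Equiv.mulLeft₀ (c : K) c.ne_zero) (walshTransform ψ f)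
  have hsingle : ∑ a, (walshTransform ψ f a + walshTransform ψ f (c * a) - (A + B)) =
      -(A + B) := by
    rw [Fintype.sum_eq_single 0 fun a ha => sub_eq_zero.2 (hswap (Units.mk0 a ha))]
    simp [hzero]
  rw [Finset.sum_sub_distrib, Finset.sum_add_distrib, sum_walshTransform hψ (map_zero f), hsum,
    Finset.sum_const, nsmul_eq_mul, Finset.card_univ] at hsingle
  linear_combination -hsingle

theorem card_le_two_of_two_valued_intCast {ψ : AddChar K ℂ} (hψ : ψ.IsPrimitive) {f : K ≃* K}
    (hf : ¬ ∀ x y, f (x + y) = f x + f y) {a b : Kˣ} {A B : ℤ}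
    (ha : walshTransform ψ f a = A) (hb : walshTransform ψ f b = B)
    (hAB : ∀ u : Kˣ, walshTransform ψ f u = A ∨ walshTransform ψ f u = B) :
    Fintype.card K ≤ 2 := by
  have hbound : ∀ {a : K} {A : ℤ}, walshTransform ψ f a = A → |A| < Fintype.card K := by
    intro a A hA
    obtain ⟨x, hx⟩ : ∃ x, ψ (f x + a * x) ≠ 1 := by
      by_contra! h
      exact hf (map_add_of_forall_addChar_eq_one hψ h)
    exact abs_lt_card_of_walshTransform_eq_intCast (map_zero f) hx hA
  have hmoment := card_sq_sub_add_of_two_valued hψ hAB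
  have hfactor := mul_sub_one_eq_of_sq_sub_add (by exact_mod_cast Fintype.one_lt_card (α := K))
    (hbound ha) (hbound hb) (by exact_mod_cast hmoment)
  obtain ⟨p, _⟩ := CharP.exists K
  obtain ⟨n, hp, hcard⟩ := FiniteField.card K p
  rw [hcard, Nat.cast_pow] at hfactor
  rw [hcard]
  exact_mod_cast prime_pow_le_two_of_mul_sub_one_eq (Nat.prime_iff_prime_int.1 hp) hfactor

theorem card_le_three_of_two_valued_of_ne {ψ : AddChar K ℂ} (hψ : ψ.IsPrimitive) {f : K ≃* K}
    {a b : Kˣ} (hab : ∀ u : Kˣ, walshTransform ψ f u = walshTransform ψ f a ∨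
      walshTransform ψ f u = walshTransform ψ f b) {c : Kˣ}
    (hfib : ∀ u v : Kˣ, walshTransform ψ f u = walshTransform ψ f v →
      walshTransform ψ f (c * u) = walshTransform ψ f (c * v))
    {u₀ : Kˣ} (hu₀ : walshTransform ψ f (c * u₀) ≠ walshTransform ψ f u₀) :
    Fintype.card K ≤ 3 := by
  have hsum := card_sub_one_mul_add_of_two_valued hψ hab hfib hu₀
  have hcard := Fintype.one_lt_card (α := K)
  obtain ⟨k, hk⟩ := exists_eq_intCast_of_intCast_mul_eq
    ((isIntegral_walshTransform ψ f a).add (isIntegral_walshTransform ψ f b))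
    (n := Fintype.card K - 1) (m := 2 * Fintype.card K) (by lia) (by exact_mod_cast hsum)
  rw [hk] at hsum
  have hmul : ((Fintype.card K : ℤ) - 1) * k = 2 * Fintype.card K := by exact_mod_cast hsum
  have hdvd : (Fintype.card K : ℤ) - 1 ∣ 2 := ⟨k - 2, by linarith⟩
  have := Int.le_of_dvd two_pos hdvd
  lia

theorem three_le_ncard_range_walshTransform {ψ : AddChar K ℂ} (hψ : ψ.IsPrimitive) {f : K ≃* K}
    (hf : ¬ ∀ x y, f (x + y) = f x + f y) :
    3 ≤ (Set.range fun u : Kˣ => walshTransform ψ f u).ncard := by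
  have hcard : 3 < Fintype.card K := by
    by_contra! hcard
    exact hf fun x y => by simp only [mulEquiv_apply_eq_self_of_card_le_three hcard f]
  refine three_le_ncard_range fun ⟨a, b, hab⟩ => hcard.not_ge ?_
  obtain ⟨p, _⟩ := CharP.exists K
  have : Fact p.Prime := ⟨CharP.char_is_prime K p⟩
  by_cases hinv : ∀ s : ℕ, s.Coprime p → ∀ u : Kˣ,
      walshTransform (ψ ^ s) f u = walshTransform ψ f u
  · have hint : ∀ u : Kˣ, ∃ k : ℤ, walshTransform ψ f u = k := fun u =>
      exists_walshTransform_eq_intCast ψ f fun s hs => hinv s hs u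
    obtain ⟨A, hA⟩ := hint a
    obtain ⟨B, hB⟩ := hint b
    have := card_le_two_of_two_valued_intCast hψ hf hA hB (by simpa only [hA, hB] using hab)
    lia
  · push Not at hinv
    obtain ⟨s, hs, u, hu⟩ := hinv
    obtain ⟨c, hc⟩ := exists_unit_walshTransform_pow p ψ f hs
    refine card_le_three_of_two_valued_of_ne hψ hab (c := c) (u₀ := u) (fun v w hvw => ?_) ?_
    · simpa only [hc] using walshTransform_pow_eq_of_eq ψ f hvw hs
    · rwa [← hc]

end TwoValued

section PowerMap

theorem exists_forall_ringHom_apply_eq_pow_pow {K : Type*} [Field K] [Finite K] (p : ℕ)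
    [Fact p.Prime] [Algebra (ZMod p) K] (φ : K →+* K) :
    ∃ j : ℕ, ∀ x, φ x = x ^ p ^ j := by
  have := Fintype.ofFinite K
  let φ' : K →ₐ[ZMod p] K :=
    { φ with
      commutes' := RingHom.congr_fun (Subsingleton.elim (φ.comp (algebraMap _ _)) _) }
  obtain ⟨j, hj⟩ := (FiniteField.bijective_frobeniusAlgHom_pow (ZMod p) K).2 φ'
  refine ⟨j, fun x => ?_⟩
  have hφ : φ x = φ' x := rfl
  rw [hφ, ← hj]
  simp [AlgHom.coe_pow, FiniteField.coe_frobeniusAlgHom, pow_iterate]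

variable {K : Type*} [Field K] [Fintype K]

theorem injective_zpow_of_gcd_card_sub_one {d : ℤ} (hd₀ : d ≠ 0)
    (hd : Int.gcd d ((Fintype.card K : ℤ) - 1) = 1) : Function.Injective fun x : K => x ^ d := by
  intro x y (hxy : x ^ d = y ^ d)
  rcases eq_or_ne y 0 with rfl | hy
  · rwa [zero_zpow d hd₀, zpow_eq_zero_iff hd₀] at hxy
  have hx : x ≠ 0 := by
    rintro rfl
    rw [zero_zpow d hd₀] at hxy
    exact zpow_ne_zero d hy hxy.symm
  have hdiv : Units.mk0 x hx / Units.mk0 y hy = 1 := by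
    rw [← pow_one (_ / _), ← hd, pow_intGCD_eq_one]
    constructor
    · ext
      simp [div_zpow, hxy, div_self (zpow_ne_zero d hy)]
    · rw [← Nat.cast_pred Fintype.card_pos, zpow_natCast, ← Fintype.card_units, pow_card_eq_one]
  exact congrArg Units.val (div_eq_one.1 hdiv)

theorem exists_mulEquiv_coe_eq_zpow {d : ℤ} (hd₀ : d ≠ 0)
    (hd : Int.gcd d ((Fintype.card K : ℤ) - 1) = 1) : ∃ f : K ≃* K, ⇑f = (· ^ d) :=
  ⟨MulEquiv.ofBijective (zpowGroupHom d)
    (Finite.injective_iff_bijective.1 (injective_zpow_of_gcd_card_sub_one hd₀ hd)), rfl⟩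

theorem modEq_of_forall_zpow_eq {d e : ℤ} (h : ∀ x : K, x ≠ 0 → x ^ d = x ^ e) :
    d ≡ e [ZMOD (Fintype.card K : ℤ) - 1] := by
  obtain ⟨g, hg⟩ := IsCyclic.exists_generator (α := Kˣ)
  have horder : orderOf g = Fintype.card K - 1 := by
    rw [orderOf_eq_card_of_forall_mem_zpowers hg, Nat.card_eq_fintype_card, Fintype.card_units]
  have hg_pow : g ^ d = g ^ e := by
    ext
    simpa using h g g.ne_zero
  rwa [zpow_eq_zpow_iff_modEq, horder, Nat.cast_pred Fintype.card_pos] at hg_pow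

theorem isDegenerate_of_zpow_add (p : ℕ) [Fact p.Prime] [Algebra (ZMod p) K] {d : ℤ}
    (hd₀ : d ≠ 0) (hadd : ∀ x y : K, (x + y) ^ d = x ^ d + y ^ d) :
    IsDegenerate p (Fintype.card K) d := by
  obtain ⟨j, hj⟩ := exists_forall_ringHom_apply_eq_pow_pow p
    { zpowGroupHom d with
      map_zero' := zero_zpow d hd₀
      map_add' := hadd : K →+* K }
  exact ⟨j, modEq_of_forall_zpow_eq (K := K) fun x _ => by exact_mod_cast hj x⟩

theorem ne_zero_of_not_isDegenerate {p : ℕ} {d : ℤ} {q : ℕ} (hd : Int.gcd d ((q : ℤ) - 1) = 1)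
    (hnd : ¬ IsDegenerate p q d) : d ≠ 0 := by
  rintro rfl
  refine hnd ⟨0, ?_⟩
  rw [Int.gcd_zero_left] at hd
  exact Int.modEq_of_dvd (Int.isUnit_iff_natAbs_eq.2 hd).dvd

end PowerMap

section CanonicalCharacter

variable (p : ℕ) [Fact p.Prime] (K : Type) [Field K] [Algebra (ZMod p) K]

/-- The canonical additive character `canonicalAddChar p K`, bundled as an `AddChar`. -/
noncomputable def traceAddChar : AddChar K ℂ :=
  ZMod.stdAddChar.compAddMonoidHom (Algebra.trace (ZMod p) K).toAddMonoidHom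

theorem traceAddChar_apply [Fintype K] (x : K) : traceAddChar p K x = canonicalAddChar p K x := by
  change ZMod.stdAddChar (Algebra.trace (ZMod p) K x) = _
  rw [ZMod.stdAddChar_apply, ZMod.toCircle_apply, canonicalAddChar]

theorem isPrimitive_traceAddChar [Finite K] : (traceAddChar p K).IsPrimitive := by
  refine AddChar.IsPrimitive.of_ne_one (AddChar.ne_one_iff.2 ?_)
  obtain ⟨x, hx⟩ := Algebra.trace_surjective (ZMod p) K 1
  refine ⟨x, fun h => one_ne_zero (α := ZMod p) (ZMod.injective_stdAddChar ?_)⟩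
  rw [AddChar.map_zero_eq_one, ← hx]
  exact h

theorem weilValues_eq_range [Fintype K] (d : ℤ) :
    weilValues p K d = Set.range fun u : Kˣ => walshTransform (traceAddChar p K) (· ^ d) u := by
  have hsum : ∀ a, walshTransform (traceAddChar p K) (· ^ d) a = weilSum p K d a := fun a => by
    simp only [walshTransform, weilSum, traceAddChar_apply]
  ext w
  simp only [weilValues, hsum, Set.mem_ofPred_eq, Set.mem_range]
  exact ⟨fun ⟨a, ha, h⟩ => ⟨Units.mk0 a ha, h⟩, fun ⟨u, h⟩ => ⟨u, u.ne_zero, h⟩⟩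

end CanonicalCharacter

theorem stmt0 (p : ℕ) [Fact p.Prime] (K : Type) [Field K] [Fintype K] [CharP K p]
    [Algebra (ZMod p) K]
    (d : ℤ) (hd : Int.gcd d ((Fintype.card K : ℤ) - 1) = 1)
    (hnd : ¬ IsDegenerate p (Fintype.card K) d) :
    3 ≤ (weilValues p K d).ncard := by
  have hd₀ : d ≠ 0 := ne_zero_of_not_isDegenerate hd hnd
  obtain ⟨f, hfd⟩ := exists_mulEquiv_coe_eq_zpow (K := K) hd₀ hd
  have hf : ¬ ∀ x y, f (x + y) = f x + f y := fun hadd =>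
    hnd (isDegenerate_of_zpow_add p hd₀ (by simpa only [hfd] using hadd))
  rw [weilValues_eq_range, ← hfd]
  exact three_le_ncard_range_walshTransform (isPrimitive_traceAddChar p K) hf
end

section
/- Let K be a finite field of characteristic p, let d be an integer with gcd(d, |K| − 1) = 1, and suppose I ⊆ J ⊆ K are subfields of K with [J : I] = 2 such that d is degenerate over I but nondegenerate over J. Then there is no complex number A such that {W_{K,d}(a) : a ∈ K^×} = {−A, 0, A}. -/
open scoped BigOperators Classical

/-!
Let `n = [K : J]`, `r = |I|`, so `|K| = r ^ (2 n)`. A Weil sum over `K` with values `0` and `±A` on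
`Kˣ` has first moment `|K|` and second moment `|K| ^ 2`; this forces `A` to be an integer with
`p |K| ∣ A ^ 2`. By the Davenport–Hasse theorem the multiplicative Fourier transforms satisfy
`Ŵ_K (χ ∘ N) = Ŵ_J χ ^ n`, hence `(Ŵ_J χ / r) ^ (2 n)` is divisible by `p` for every `χ`: each
`Ŵ_J χ / r` lies in the radical of `(p)` in the ring of algebraic integers.

On the other hand, since `d` is degenerate over `I`, summing along the lines of the `I`-plane `J`
shows that every value `W_J a` is either `-r` or nonnegative. If all were nonnegative, the first two
moments would force some `W_J a` to equal `|J|`, which only happens when `d` is degenerate over `J`.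
So `W_J a = -r` for some `a ≠ 0`, and Fourier inversion puts `(r ^ 2 - 1) (W_J a / r) = 1 - r ^ 2`,
hence `1`, in the radical of `(p)`, which is absurd.
-/

section DavenportHasse

open Polynomial Finset

variable {J : Type*} [Field J]

/-- The finite set of monic polynomials of degree `n` over a finite field. -/
noncomputable def monicsOfDegree (J : Type*) [Field J] [Finite J] (n : ℕ) : Finset J[X] :=
  haveI : Finite {f : J[X] | f.Monic ∧ f.natDegree = n} :=
    haveI := Finite.of_equiv _ (degreeLTEquiv J n).toEquiv.symm
    Finite.of_equiv _ (monicEquivDegreeLT n).symm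
  (Set.toFinite {f : J[X] | f.Monic ∧ f.natDegree = n}).toFinset

theorem mem_monicsOfDegree [Finite J] {n : ℕ} {f : J[X]} :
    f ∈ monicsOfDegree J n ↔ f.Monic ∧ f.natDegree = n := by
  simp [monicsOfDegree]

/-- The pairs `(P, k)` with `P` monic irreducible, `k ≥ 1` and `P ^ k` of degree `n`: an encoding
of the monic prime powers of degree `n`, along which the logarithmic derivative of an
`L`-function expands. -/
noncomputable def primePowersOfDegree (J : Type*) [Field J] [Finite J] (n : ℕ) :
    Finset (J[X] × ℕ) :=
  {x ∈ (Icc 1 n).biUnion (monicsOfDegree J) ×ˢ Icc 1 n |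
    Irreducible x.1 ∧ x.2 * x.1.natDegree = n}

theorem mem_primePowersOfDegree [Finite J] {n : ℕ} {P : J[X]} {k : ℕ} :
    (P, k) ∈ primePowersOfDegree J n ↔
      P.Monic ∧ Irreducible P ∧ 1 ≤ k ∧ k * P.natDegree = n := by
  simp only [primePowersOfDegree, mem_filter, mem_product, mem_biUnion, mem_Icc,
    mem_monicsOfDegree]
  constructor
  · rintro ⟨⟨⟨m, -, hP, -⟩, hk, -⟩, hirr, hn⟩
    exact ⟨hP, hirr, hk, hn⟩
  · rintro ⟨hP, hirr, hk, rfl⟩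
    have hdeg := hirr.natDegree_pos
    exact ⟨⟨⟨_, ⟨hdeg, Nat.le_mul_of_pos_left _ hk⟩, hP, rfl⟩, hk, Nat.le_mul_of_pos_right _ hdeg⟩,
      hirr, rfl⟩

theorem pow_dvd_iff_le_count_normalizedFactors {f P : J[X]} (hf : f ≠ 0) (hP : P.Monic)
    (hirr : Irreducible P) (k : ℕ) :
    P ^ k ∣ f ↔ k ≤ (UniqueFactorizationMonoid.normalizedFactors f).count P := by
  rw [pow_dvd_iff_le_emultiplicity,
    UniqueFactorizationMonoid.emultiplicity_eq_count_normalizedFactors hirr hf,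
    hP.normalize_eq_self, Nat.cast_le]

theorem natDegree_eq_sum_count_normalizedFactors {f : J[X]} (hf : f.Monic) :
    f.natDegree = ∑ P ∈ (UniqueFactorizationMonoid.normalizedFactors f).toFinset,
      (UniqueFactorizationMonoid.normalizedFactors f).count P * P.natDegree := by
  have hprod : (UniqueFactorizationMonoid.normalizedFactors f).prod = f := by
    rw [UniqueFactorizationMonoid.prod_normalizedFactors_eq hf.ne_zero, hf.normalize_eq_self]
  conv_lhs => rw [← hprod]
  rw [natDegree_multiset_prod_of_monic _ fun P hP ↦
    ((Polynomial.mem_normalizedFactors_iff hf.ne_zero).mp hP).2.1, sum_multiset_map_count]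
  simp only [smul_eq_mul]

theorem natDegree_eq_sum_primePowersOfDegree [Finite J] {f : J[X]} (hf : f.Monic) :
    f.natDegree = ∑ m ∈ Icc 1 f.natDegree,
      ∑ x ∈ primePowersOfDegree J m with x.1 ^ x.2 ∣ f, x.1.natDegree := by
  set s := UniqueFactorizationMonoid.normalizedFactors f
  have hdisj : (Icc 1 f.natDegree : Set ℕ).PairwiseDisjoint
      fun m ↦ {x ∈ primePowersOfDegree J m | x.1 ^ x.2 ∣ f} := by
    refine fun m _ m' _ hne ↦ disjoint_left.mpr fun x hx hx' ↦ hne ?_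
    rw [mem_filter, mem_primePowersOfDegree] at hx hx'
    exact hx.1.2.2.2.symm.trans hx'.1.2.2.2
  rw [← sum_biUnion hdisj, sum_finset_product _ s.toFinset (fun P ↦ Icc 1 (s.count P))]
  · simpa only [sum_const, Nat.card_Icc, Nat.add_sub_cancel, smul_eq_mul] using
      natDegree_eq_sum_count_normalizedFactors hf
  rintro ⟨P, k⟩
  simp only [mem_biUnion, mem_filter, mem_primePowersOfDegree, mem_Icc, Multiset.mem_toFinset,
    s, Polynomial.mem_normalizedFactors_iff hf.ne_zero]
  constructor
  · rintro ⟨m, -, ⟨hP, hirr, hk, -⟩, hdvd⟩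
    exact ⟨⟨hirr, hP, (dvd_pow_self P (by omega)).trans hdvd⟩, hk,
      (pow_dvd_iff_le_count_normalizedFactors hf.ne_zero hP hirr k).mp hdvd⟩
  · rintro ⟨⟨hirr, hP, -⟩, hk, hle⟩
    have hdvd := (pow_dvd_iff_le_count_normalizedFactors hf.ne_zero hP hirr k).mpr hle
    exact ⟨k * P.natDegree, ⟨Nat.mul_pos hk hirr.natDegree_pos,
      natDegree_pow P k ▸ natDegree_le_of_dvd hdvd hf.ne_zero⟩, ⟨hP, hirr, hk, rfl⟩, hdvd⟩

variable {R : Type*} [CommRing R]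

/-- The completely multiplicative function `X ^ n - a X ^ (n - 1) + ⋯ + (-1) ^ n b ↦ χ b * ψ a` on
monic polynomials attached to a multiplicative character `χ` and an additive character `ψ`. -/
noncomputable def polyChar (χ : MulChar J R) (ψ : AddChar J R) (f : J[X]) : R :=
  χ ((-1) ^ f.natDegree * f.coeff 0) * ψ (-f.nextCoeff)

theorem polyChar_one (χ : MulChar J R) (ψ : AddChar J R) : polyChar χ ψ 1 = 1 := by
  simp [polyChar, nextCoeff]

theorem polyChar_mul (χ : MulChar J R) (ψ : AddChar J R) {f g : J[X]} (hf : f.Monic)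
    (hg : g.Monic) : polyChar χ ψ (f * g) = polyChar χ ψ f * polyChar χ ψ g := by
  simp only [polyChar]
  rw [hf.natDegree_mul hg, mul_coeff_zero, hf.nextCoeff_mul hg, neg_add, ψ.map_add_eq_mul,
    pow_add, mul_mul_mul_comm, map_mul, mul_mul_mul_comm]

theorem polyChar_pow (χ : MulChar J R) (ψ : AddChar J R) {f : J[X]} (hf : f.Monic) (k : ℕ) :
    polyChar χ ψ (f ^ k) = polyChar χ ψ f ^ k := by
  induction k with
  | zero => rw [pow_zero, pow_zero, polyChar_one]
  | succ k ih => rw [pow_succ, polyChar_mul χ ψ (hf.pow k) hf, ih, pow_succ]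

/-- The coefficient of `T ^ n` in the `L`-function `∑ f, polyChar χ ψ f * T ^ deg f`. -/
noncomputable def lCoeff [Finite J] (χ : MulChar J R) (ψ : AddChar J R) (n : ℕ) : R :=
  ∑ f ∈ monicsOfDegree J n, polyChar χ ψ f

theorem lCoeff_zero [Finite J] (χ : MulChar J R) (ψ : AddChar J R) : lCoeff χ ψ 0 = 1 := by
  have hone : monicsOfDegree J 0 = {1} := by
    ext f
    rw [mem_monicsOfDegree, mem_singleton]
    exact ⟨fun h ↦ h.1.natDegree_eq_zero.mp h.2, by rintro rfl; simp⟩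
  rw [lCoeff, hone, sum_singleton, polyChar_one]

theorem lCoeff_one [Fintype J] (χ : MulChar J R) (ψ : AddChar J R) :
    lCoeff χ ψ 1 = gaussSum χ ψ := by
  refine (sum_bij (fun b _ ↦ X - C b) (fun b _ ↦ ?_) (fun a _ b _ h ↦ by simpa using h)
    (fun f hf ↦ ?_) fun b _ ↦ ?_).symm
  · exact mem_monicsOfDegree.mpr ⟨monic_X_sub_C b, natDegree_X_sub_C b⟩
  · rw [mem_monicsOfDegree] at hf
    exact ⟨-f.coeff 0, mem_univ _, by
      rw [map_neg, sub_neg_eq_add, ← hf.1.eq_X_add_C hf.2]⟩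
  · simp [polyChar, nextCoeff]

theorem add_C_mul_X_pow_mem_monicsOfDegree [Finite J] {n : ℕ} {f : J[X]}
    (hf : f ∈ monicsOfDegree J (n + 1)) (c : J) : f + C c * X ^ n ∈ monicsOfDegree J (n + 1) := by
  rw [mem_monicsOfDegree] at hf ⊢
  have hlt : (C c * X ^ n).degree < f.degree := by
    rw [degree_eq_natDegree hf.1.ne_zero, hf.2]
    exact (degree_C_mul_X_pow_le _ _).trans_lt (by exact_mod_cast n.lt_succ_self)
  exact ⟨hf.1.add_of_left hlt, by rw [natDegree_add_eq_left_of_degree_lt hlt, hf.2]⟩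

theorem polyChar_add_C_mul_X_pow [Finite J] (χ : MulChar J R) (ψ : AddChar J R) {n : ℕ}
    (hn : n ≠ 0) {f : J[X]} (hf : f ∈ monicsOfDegree J (n + 1)) (c : J) :
    polyChar χ ψ (f + C c * X ^ n) = polyChar χ ψ f * ψ (-c) := by
  have hdeg := (mem_monicsOfDegree.mp hf).2
  have hdeg' := (mem_monicsOfDegree.mp (add_C_mul_X_pow_mem_monicsOfDegree hf c)).2
  have hnext : (f + C c * X ^ n).nextCoeff = f.nextCoeff + c := by
    rw [nextCoeff_of_natDegree_pos (by omega), nextCoeff_of_natDegree_pos (by omega), hdeg', hdeg]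
    simp
  have hconst : (f + C c * X ^ n).coeff 0 = f.coeff 0 := by
    rw [coeff_add, coeff_C_mul_X_pow, if_neg hn.symm, add_zero]
  rw [polyChar, polyChar, hnext, hconst, hdeg', hdeg, neg_add, ψ.map_add_eq_mul, mul_assoc]

theorem lCoeff_eq_zero [Finite J] [IsDomain R] (χ : MulChar J R) {ψ : AddChar J R} (hψ : ψ ≠ 1)
    {n : ℕ} (hn : 2 ≤ n) : lCoeff χ ψ n = 0 := by
  obtain ⟨n, rfl⟩ : ∃ m, n = m + 1 := ⟨n - 1, by omega⟩
  obtain ⟨b, hb⟩ := AddChar.ne_one_iff.mp hψ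
  have hinv : lCoeff χ ψ (n + 1) = lCoeff χ ψ (n + 1) * ψ b := by
    rw [lCoeff, sum_mul]
    refine (sum_bij' (fun f _ ↦ f + C (-b) * X ^ n) (fun f _ ↦ f + C b * X ^ n)
      (fun f hf ↦ add_C_mul_X_pow_mem_monicsOfDegree hf _)
      (fun f hf ↦ add_C_mul_X_pow_mem_monicsOfDegree hf _)
      (fun f _ ↦ by simp) (fun f _ ↦ by simp) fun f hf ↦ ?_).symm
    rw [polyChar_add_C_mul_X_pow χ ψ (by omega) hf, neg_neg]
  exact (mul_right_eq_self₀.mp hinv.symm).resolve_left hb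

theorem sum_polyChar_of_dvd [Finite J] (χ : MulChar J R) (ψ : AddChar J R) {n : ℕ} {Q : J[X]}
    (hQ : Q.Monic) (hn : Q.natDegree ≤ n) :
    ∑ f ∈ monicsOfDegree J n with Q ∣ f, polyChar χ ψ f =
      polyChar χ ψ Q * lCoeff χ ψ (n - Q.natDegree) := by
  rw [lCoeff, mul_sum]
  refine (sum_bij (fun g _ ↦ Q * g) (fun g hg ↦ ?_)
    (fun a _ b _ hab ↦ mul_left_cancel₀ hQ.ne_zero hab) (fun f hf ↦ ?_) fun g hg ↦ ?_).symm
  · rw [mem_monicsOfDegree] at hg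
    rw [mem_filter, mem_monicsOfDegree, hQ.natDegree_mul hg.1, hg.2]
    exact ⟨⟨hQ.mul hg.1, by omega⟩, dvd_mul_right _ _⟩
  · rw [mem_filter, mem_monicsOfDegree] at hf
    obtain ⟨⟨hmonic, hdeg⟩, g, rfl⟩ := hf
    have hg : g.Monic := hQ.of_mul_monic_left hmonic
    rw [hQ.natDegree_mul hg] at hdeg
    exact ⟨g, mem_monicsOfDegree.mpr ⟨hg, by omega⟩, rfl⟩
  · exact (polyChar_mul χ ψ hQ (mem_monicsOfDegree.mp hg).1).symm

/-- The coefficient of `T ^ n` in `T * L' / L`, where `L` is the `L`-function with coefficients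
`lCoeff χ ψ`. -/
noncomputable def logDerivCoeff [Finite J] (χ : MulChar J R) (ψ : AddChar J R) (n : ℕ) : R :=
  ∑ x ∈ primePowersOfDegree J n, x.1.natDegree * polyChar χ ψ x.1 ^ x.2

theorem natCast_mul_lCoeff [Finite J] (χ : MulChar J R) (ψ : AddChar J R) (n : ℕ) :
    n * lCoeff χ ψ n = ∑ m ∈ Icc 1 n, logDerivCoeff χ ψ m * lCoeff χ ψ (n - m) := by
  have hexpand : ∀ f ∈ monicsOfDegree J n, n * polyChar χ ψ f =
      ∑ m ∈ Icc 1 n, ∑ x ∈ primePowersOfDegree J m,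
        x.1.natDegree * if x.1 ^ x.2 ∣ f then polyChar χ ψ f else 0 := by
    intro f hf
    obtain ⟨hmonic, rfl⟩ := mem_monicsOfDegree.mp hf
    conv_lhs => rw [natDegree_eq_sum_primePowersOfDegree hmonic]
    simp only [Nat.cast_sum, sum_mul, sum_filter, Nat.cast_ite, ite_mul, Nat.cast_zero, zero_mul,
      mul_ite, mul_zero]
  rw [lCoeff, mul_sum, sum_congr rfl hexpand, sum_comm]
  refine sum_congr rfl fun m hm ↦ ?_
  rw [sum_comm, logDerivCoeff, sum_mul]
  refine sum_congr rfl fun ⟨P, k⟩ hPk ↦ ?_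
  obtain ⟨hP, -, -, rfl⟩ := mem_primePowersOfDegree.mp hPk
  rw [← mul_sum, ← sum_filter, sum_polyChar_of_dvd χ ψ (hP.pow k)
    (natDegree_pow P k ▸ (mem_Icc.mp hm).2), natDegree_pow, polyChar_pow χ ψ hP, mul_assoc]

theorem logDerivCoeff_succ [Fintype J] [IsDomain R] (χ : MulChar J R) {ψ : AddChar J R}
    (hψ : ψ ≠ 1) (n : ℕ) : logDerivCoeff χ ψ (n + 1) = (-1) ^ n * gaussSum χ ψ ^ (n + 1) := by
  induction n with
  | zero => simpa [lCoeff_zero, lCoeff_one] using (natCast_mul_lCoeff χ ψ 1).symm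
  | succ n ih =>
    have hnewton := natCast_mul_lCoeff χ ψ (n + 2)
    have hlow : ∀ m ∈ Icc 1 n, logDerivCoeff χ ψ m * lCoeff χ ψ (n + 2 - m) = 0 := fun m hm ↦ by
      rw [lCoeff_eq_zero χ hψ (by have := mem_Icc.mp hm; omega), mul_zero]
    rw [lCoeff_eq_zero χ hψ (by omega), sum_Icc_succ_top (by omega), sum_Icc_succ_top (by omega),
      sum_eq_zero hlow, show n + 2 - (n + 1) = 1 by omega, Nat.sub_self, lCoeff_zero,
      lCoeff_one, ih] at hnewton
    linear_combination -hnewton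

variable {K : Type*} [Field K] [Algebra J K]

theorem card_filter_minpoly_eq [Finite J] [Fintype K] {P : J[X]} (hP : P.Monic)
    (hirr : Irreducible P) (hdvd : P.natDegree ∣ Module.finrank J K) :
    #{x : K | minpoly J x = P} = P.natDegree := by
  have hfrob := map_dvd (mapRingHom (algebraMap J K))
    (hirr.natDegree_dvd_iff_dvd_X_pow_card_pow_sub_X.mp hdvd)
  rw [← Module.natCard_eq_pow_finrank (K := J) (V := K), Nat.card_eq_fintype_card] at hfrob
  simp only [coe_mapRingHom, Polynomial.map_sub, Polynomial.map_pow, map_X] at hfrob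
  have hsplits : (P.map (algebraMap J K)).Splits := by
    refine Splits.of_dvd ?_ (FiniteField.X_pow_card_sub_X_ne_zero _ Fintype.one_lt_card) hfrob
    rw [splits_iff_card_roots, FiniteField.roots_X_pow_card_sub_X,
      FiniteField.X_pow_card_sub_X_natDegree_eq _ Fintype.one_lt_card]
    simp
  rw [← card_rootSet_eq_natDegree (PerfectField.separable_of_irreducible hirr) hsplits,
    ← Set.toFinset_card]
  congr 1
  ext x
  rw [mem_filter_univ, Set.mem_toFinset, mem_rootSet_of_ne hirr.ne_zero]
  exact ⟨by rintro rfl; exact minpoly.aeval _ _,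
    fun hx ↦ (minpoly.eq_of_irreducible_of_monic hirr hx hP).symm⟩

theorem map_norm_mul_map_trace [FiniteDimensional J K] (χ : MulChar J R) (ψ : AddChar J R)
    (x : K) : χ (Algebra.norm J x) * ψ (Algebra.trace J K x) =
      polyChar χ ψ (minpoly J x) ^ (Module.finrank J K / (minpoly J x).natDegree) := by
  have hx : IsIntegral J x := Algebra.IsIntegral.isIntegral x
  have hquot : Module.finrank J K / (minpoly J x).natDegree =
      Module.finrank (IntermediateField.adjoin J {x}) K := by
    rw [← IntermediateField.adjoin.finrank hx]
    exact Nat.div_eq_of_eq_mul_right Module.finrank_pos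
      (Module.finrank_mul_finrank J (IntermediateField.adjoin J {x}) K).symm
  have hgen : minpoly J (IntermediateField.adjoin.powerBasis hx).gen = minpoly J x :=
    IntermediateField.minpoly_gen J x
  have hnorm : Algebra.norm J (IntermediateField.AdjoinSimple.gen J x) =
      (-1) ^ (minpoly J x).natDegree * (minpoly J x).coeff 0 := by
    rw [← hgen, (IntermediateField.adjoin.powerBasis hx).natDegree_minpoly]
    exact Algebra.PowerBasis.norm_gen_eq_coeff_zero_minpoly (IntermediateField.adjoin.powerBasis hx)
  rw [hquot, trace_eq_finrank_mul_minpoly_nextCoeff, Algebra.norm_eq_norm_adjoin, hnorm, polyChar,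
    mul_pow (χ _), map_pow, ← nsmul_eq_mul, ψ.map_nsmul_eq_pow]

/-- The lift `χ ∘ N` of multiplicative characters along a finite extension of fields. -/
noncomputable def normLift (K : Type*) [Field K] [Algebra J K] [FiniteDimensional J K] :
    MulChar J R →* MulChar K R where
  toFun χ :=
    { χ.toMonoidHom.comp (Algebra.norm J) with
      map_nonunit' := fun x hx ↦ by
        obtain rfl : x = 0 := by simpa using hx
        simp [MulChar.map_zero] }
  map_one' := MulChar.ext fun u ↦ by
    simp [MulChar.one_apply]
  map_mul' _ _ := MulChar.ext' fun _ ↦ rfl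

theorem normLift_apply [FiniteDimensional J K] (χ : MulChar J R) (x : K) :
    normLift K χ x = χ (Algebra.norm J x) := rfl

/-- The lift `ψ ∘ Tr` of additive characters along a finite extension of fields. -/
noncomputable def traceLift (K : Type*) [Field K] [Algebra J K] (ψ : AddChar J R) : AddChar K R :=
  ψ.compAddMonoidHom (Algebra.trace J K).toAddMonoidHom

theorem traceLift_apply (ψ : AddChar J R) (x : K) :
    traceLift K ψ x = ψ (Algebra.trace J K x) := rfl

theorem gaussSum_normLift_traceLift_eq_logDerivCoeff [Finite J] [Fintype K] (χ : MulChar J R)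
    (ψ : AddChar J R) : gaussSum (normLift K χ) (traceLift K ψ) =
      logDerivCoeff χ ψ (Module.finrank J K) := by
  set n := Module.finrank J K
  have hdvd (x : K) : (minpoly J x).natDegree ∣ n :=
    minpoly.degree_dvd (Algebra.IsIntegral.isIntegral x)
  have hmaps : ∀ x ∈ (univ : Finset K), (minpoly J x, n / (minpoly J x).natDegree) ∈
      primePowersOfDegree J n := fun x _ ↦ by
    have hx : IsIntegral J x := Algebra.IsIntegral.isIntegral x
    have hle := Nat.le_of_dvd Module.finrank_pos (hdvd x)
    exact mem_primePowersOfDegree.mpr ⟨minpoly.monic hx, minpoly.irreducible hx,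
      Nat.div_pos hle (minpoly.natDegree_pos hx), Nat.div_mul_cancel (hdvd x)⟩
  simp only [gaussSum, normLift_apply, traceLift_apply, map_norm_mul_map_trace]
  rw [← sum_fiberwise_of_maps_to hmaps, logDerivCoeff]
  refine sum_congr rfl fun ⟨P, k⟩ hPk ↦ ?_
  obtain ⟨hP, hirr, -, hk⟩ := mem_primePowersOfDegree.mp hPk
  have hquot : n / P.natDegree = k := Nat.div_eq_of_eq_mul_left hirr.natDegree_pos hk.symm
  have hfiber : ({x : K | (minpoly J x, n / (minpoly J x).natDegree) = (P, k)} : Finset K) =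
      ({x : K | minpoly J x = P} : Finset K) :=
    filter_congr fun x _ ↦ by
      rw [Prod.mk.injEq, and_iff_left_iff_imp]
      rintro rfl
      exact hquot
  rw [hfiber, sum_congr rfl fun x hx ↦ by rw [(mem_filter_univ x).mp hx, hquot], sum_const,
    card_filter_minpoly_eq hP hirr (Dvd.intro_left k hk), nsmul_eq_mul]

theorem gaussSum_normLift_traceLift [Fintype J] [Fintype K] [IsDomain R] (χ : MulChar J R)
    {ψ : AddChar J R} (hψ : ψ ≠ 1) :
    gaussSum (normLift K χ) (traceLift K ψ) =
      (-1) ^ (Module.finrank J K - 1) * gaussSum χ ψ ^ Module.finrank J K := by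
  obtain ⟨n, hn⟩ : ∃ n, Module.finrank J K = n + 1 :=
    Nat.exists_eq_succ_of_ne_zero Module.finrank_pos.ne'
  rw [gaussSum_normLift_traceLift_eq_logDerivCoeff, hn, logDerivCoeff_succ χ hψ,
    Nat.add_sub_cancel]

end DavenportHasse

section MultiplicativeCharacters

variable {F R : Type*} [Field F] [CommRing R]

theorem ne_zero_of_zpow_injective {d : ℤ} (hd : Function.Injective fun x : F ↦ x ^ d) :
    d ≠ 0 := by
  rintro rfl
  exact zero_ne_one (hd (by simp : (0 : F) ^ (0 : ℤ) = 1 ^ (0 : ℤ)))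

theorem mulChar_zpow_apply (χ : MulChar F R) {d : ℤ} (hd : d ≠ 0) (x : F) :
    (χ ^ d) x = χ (x ^ d) := by
  rcases eq_or_ne x 0 with rfl | hx
  · rw [zero_zpow d hd, MulChar.map_zero, MulChar.map_zero]
  · rw [← Units.val_mk0 hx, MulChar.zpow_apply_coe, Units.val_zpow_eq_zpow_val]

theorem mulChar_zpow_surjective [Finite F] [IsDomain R] {d : ℤ}
    (hd : Function.Bijective fun x : F ↦ x ^ d) :
    Function.Surjective fun χ : MulChar F R ↦ χ ^ d := by
  have hd0 := ne_zero_of_zpow_injective hd.1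
  refine Finite.surjective_of_injective <|
    (injective_iff_map_eq_one (zpowGroupHom d : MulChar F R →* MulChar F R)).mpr fun χ hχ ↦
      MulChar.eq_one_iff.mpr fun u ↦ ?_
  obtain ⟨x, hx⟩ := hd.2 u
  beta_reduce at hx
  have hx0 : x ≠ 0 := by
    rintro rfl
    exact u.ne_zero (by rw [← hx, zero_zpow d hd0])
  rw [← hx, ← mulChar_zpow_apply χ hd0, ← zpowGroupHom_apply, hχ, MulChar.one_apply hx0.isUnit]

theorem sum_mulChar_apply [Finite F] [Fintype (MulChar F R)] [IsDomain R]
    [HasEnoughRootsOfUnity R (Monoid.exponent Fˣ)] (a : F) :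
    ∑ χ : MulChar F R, χ a = if a = 1 then (Nat.card Fˣ : R) else 0 := by
  split_ifs with ha
  · simp only [ha, map_one, Finset.sum_const, Finset.card_univ, nsmul_eq_mul, mul_one,
      ← MulChar.card_eq_card_units_of_hasEnoughRootsOfUnity F R, Nat.card_eq_fintype_card]
  · obtain ⟨χ, hχ⟩ := MulChar.exists_apply_ne_one_of_hasEnoughRootsOfUnity F R ha
    refine eq_zero_of_mul_eq_self_left hχ ?_
    simp only [Finset.mul_sum, ← MulChar.mul_apply]
    exact Fintype.sum_bijective _ (Group.mulLeft_bijective χ) _ _ fun _ ↦ rfl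

theorem mulChar_fourier_inversion [Fintype F] [Fintype (MulChar F R)] [IsDomain R]
    [HasEnoughRootsOfUnity R (Monoid.exponent Fˣ)] (f : F → R) {a : F} (ha : a ≠ 0) :
    ∑ χ : MulChar F R, χ a⁻¹ * ∑ b, χ b * f b = Nat.card Fˣ * f a := by
  have hkernel (b : F) : ∑ χ : MulChar F R, χ a⁻¹ * χ b =
      if b = a then (Nat.card Fˣ : R) else 0 := by
    simp only [← map_mul, sum_mulChar_apply, inv_mul_eq_one₀ ha, eq_comm]
  simp only [Finset.mul_sum, ← mul_assoc]
  rw [Finset.sum_comm]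
  simp only [← Finset.sum_mul, hkernel, ite_mul, zero_mul, Finset.sum_ite_eq', Finset.mem_univ,
    if_true]

variable {K : Type*} [Field K] [Finite K] [Algebra F K]

theorem normLift_injective : Function.Injective (normLift K : MulChar F R →* MulChar K R) := by
  intro χ χ' h
  refine MulChar.ext' fun y ↦ ?_
  obtain ⟨x, rfl⟩ := FiniteField.norm_surjective F K y
  exact DFunLike.congr_fun h x

theorem traceLift_ne_one {ψ : AddChar F R} (hψ : ψ ≠ 1) : traceLift K ψ ≠ 1 := by
  obtain ⟨y, hy⟩ := AddChar.ne_one_iff.mp hψ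
  obtain ⟨x, rfl⟩ := Algebra.trace_surjective F K y
  exact AddChar.ne_one_iff.mpr ⟨x, hy⟩

end MultiplicativeCharacters

section WeilSum

variable {F R : Type*} [Field F] [Fintype F] [CommRing R]

/-- The Weil sum `∑ x, ψ (x ^ d + a * x)` of an arbitrary additive character `ψ`. -/
def charWeilSum (ψ : AddChar F R) (d : ℤ) (a : F) : R :=
  ∑ x : F, ψ (x ^ d + a * x)

theorem sum_addChar_mul [IsDomain R] {ψ : AddChar F R} (hψ : ψ ≠ 1) (b : F) :
    ∑ a, ψ (a * b) = if b = 0 then (Fintype.card F : R) else 0 := by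
  rw [AddChar.sum_mulShift b (AddChar.IsPrimitive.of_ne_one hψ), Nat.cast_ite, Nat.cast_zero]

theorem charWeilSum_zero [IsDomain R] {ψ : AddChar F R} (hψ : ψ ≠ 1) {d : ℤ}
    (hd : Function.Bijective fun x : F ↦ x ^ d) : charWeilSum ψ d 0 = 0 := by
  simp only [charWeilSum, zero_mul, add_zero]
  rw [hd.sum_comp ψ]
  exact AddChar.sum_eq_zero_of_ne_one hψ

theorem sum_charWeilSum [IsDomain R] {ψ : AddChar F R} (hψ : ψ ≠ 1) {d : ℤ} (hd : d ≠ 0) :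
    ∑ a, charWeilSum ψ d a = Fintype.card F := by
  simp only [charWeilSum, AddChar.map_add_eq_mul]
  rw [Finset.sum_comm]
  simp only [← Finset.mul_sum, sum_addChar_mul hψ, mul_ite, mul_zero, Finset.sum_ite_eq',
    Finset.mem_univ, if_true, zero_zpow d hd, AddChar.map_zero_eq_one, one_mul]

theorem sum_charWeilSum_mul_charWeilSum_inv [IsDomain R] {ψ : AddChar F R} (hψ : ψ ≠ 1) (d : ℤ) :
    ∑ a, charWeilSum ψ d a * charWeilSum ψ⁻¹ d a = (Fintype.card F : R) ^ 2 := by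
  have hexpand (a : F) : charWeilSum ψ d a * charWeilSum ψ⁻¹ d a =
      ∑ x, ∑ y, ψ (x ^ d - y ^ d) * ψ (a * (x - y)) := by
    simp only [charWeilSum, Finset.sum_mul_sum, AddChar.inv_apply, ← AddChar.map_add_eq_mul]
    refine Finset.sum_congr rfl fun x _ ↦ Finset.sum_congr rfl fun y _ ↦ congrArg ψ ?_
    ring
  simp only [hexpand]
  rw [Finset.sum_comm, Finset.sum_congr rfl fun _ _ ↦ Finset.sum_comm]
  simp only [← Finset.mul_sum, sum_addChar_mul hψ, sub_eq_zero, mul_ite, mul_zero,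
    Finset.sum_ite_eq, Finset.mem_univ, if_true, sub_self, AddChar.map_zero_eq_one, one_mul,
    Finset.sum_const, Finset.card_univ, nsmul_eq_mul, sq]

theorem sum_one_mul_charWeilSum [IsDomain R] {ψ : AddChar F R} (hψ : ψ ≠ 1) {d : ℤ}
    (hd : Function.Bijective fun x : F ↦ x ^ d) :
    ∑ a, (1 : MulChar F R) a * charWeilSum ψ d a = Fintype.card F := by
  rw [← sum_charWeilSum hψ (ne_zero_of_zpow_injective hd.1)]
  refine Finset.sum_congr rfl fun a _ ↦ ?_
  rcases eq_or_ne a 0 with rfl | ha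
  · rw [charWeilSum_zero hψ hd, mul_zero]
  · rw [MulChar.one_apply ha.isUnit, one_mul]

theorem sum_mulChar_mul_addChar [IsDomain R] {χ : MulChar F R} (hχ : χ ≠ 1) (ψ : AddChar F R)
    (x : F) : ∑ a, χ a * ψ (a * x) = χ⁻¹ x * gaussSum χ ψ := by
  rcases eq_or_ne x 0 with rfl | hx
  · simp only [mul_zero, AddChar.map_zero_eq_one, mul_one, MulChar.sum_eq_zero_of_ne_one hχ,
      MulChar.map_zero, zero_mul]
  · rw [← Units.val_mk0 hx, ← gaussSum_mulShift_eq]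
    simp only [gaussSum, AddChar.mulShift_apply, mul_comm]

theorem sum_mulChar_zpow_mul_charWeilSum [IsDomain R] (ψ : AddChar F R) {d : ℤ}
    (hd : Function.Bijective fun x : F ↦ x ^ d) {χ : MulChar F R} (hχ : χ ^ d ≠ 1) :
    ∑ a, (χ ^ d) a * charWeilSum ψ d a = gaussSum (χ ^ d) ψ * gaussSum χ⁻¹ ψ := by
  have hexpand (a : F) : (χ ^ d) a * charWeilSum ψ d a =
      ∑ x, ψ (x ^ d) * ((χ ^ d) a * ψ (a * x)) := by
    simp only [charWeilSum, Finset.mul_sum, AddChar.map_add_eq_mul, mul_left_comm]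
  have hinv (x : F) : (χ ^ d)⁻¹ x = χ⁻¹ (x ^ d) := by
    rw [← inv_zpow, mulChar_zpow_apply _ (ne_zero_of_zpow_injective hd.1)]
  simp only [hexpand]
  rw [Finset.sum_comm]
  simp only [← Finset.mul_sum, sum_mulChar_mul_addChar hχ, hinv]
  rw [gaussSum.eq_def χ⁻¹ ψ, ← hd.sum_comp fun y ↦ χ⁻¹ y * ψ y, Finset.mul_sum]
  exact Finset.sum_congr rfl fun x _ ↦ by ring

theorem sum_normLift_mul_charWeilSum_traceLift {K : Type*} [Field K] [Fintype K] [Algebra F K]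
    [IsDomain R] {ψ : AddChar F R} (hψ : ψ ≠ 1) {d : ℤ}
    (hF : Function.Bijective fun x : F ↦ x ^ d) (hK : Function.Bijective fun x : K ↦ x ^ d)
    (η : MulChar F R) :
    ∑ b, normLift K η b * charWeilSum (traceLift K ψ) d b =
      (∑ b, η b * charWeilSum ψ d b) ^ Module.finrank F K := by
  rcases eq_or_ne η 1 with rfl | hη
  · rw [map_one, sum_one_mul_charWeilSum (traceLift_ne_one hψ) hK, sum_one_mul_charWeilSum hψ hF,
      Module.card_eq_pow_finrank (K := F) (V := K), Nat.cast_pow]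
  · obtain ⟨χ, rfl⟩ := mulChar_zpow_surjective hF η
    have hlift : normLift K χ ^ d ≠ 1 := by
      rw [← map_zpow, ← map_one (normLift (J := F) (R := R) K)]
      exact normLift_injective.ne hη
    beta_reduce
    rw [map_zpow, sum_mulChar_zpow_mul_charWeilSum _ hK hlift, ← map_zpow, ← map_inv,
      gaussSum_normLift_traceLift _ hψ, gaussSum_normLift_traceLift _ hψ,
      sum_mulChar_zpow_mul_charWeilSum ψ hF hη, mul_mul_mul_comm, ← mul_pow, ← mul_pow]
    simp

end WeilSum

section Degeneracy

variable {F : Type*} [Field F]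

/-- The power map `x ↦ x ^ d` is additive on the field `F`. Over a finite field of characteristic
`p` this says that `d` is congruent to a power of `p`, see `isDegenerate_iff`. -/
def IsAdditiveExponent (F : Type*) [Field F] (d : ℤ) : Prop :=
  ∀ x y : F, (x + y) ^ d = x ^ d + y ^ d

theorem IsAdditiveExponent.ne_zero {d : ℤ} (hd : IsAdditiveExponent F d) : d ≠ 0 := by
  rintro rfl
  simpa using hd 0 0

theorem card_units_eq_card_sub_one [Fintype F] : (Nat.card Fˣ : ℤ) = Fintype.card F - 1 := by
  rw [Nat.card_eq_fintype_card, Fintype.card_units, Nat.cast_pred Fintype.card_pos]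

theorem zpow_eq_zpow_of_modEq [Fintype F] {m n : ℤ} (h : m ≡ n [ZMOD Fintype.card F - 1]) {x : F}
    (hx : x ≠ 0) : x ^ m = x ^ n := by
  rw [← card_units_eq_card_sub_one] at h
  have hunit := zpow_eq_zpow_iff_modEq.mpr <|
    h.of_dvd (Int.natCast_dvd_natCast.mpr (orderOf_dvd_natCard (Units.mk0 x hx)))
  simpa only [Units.val_zpow_eq_zpow_val, Units.val_mk0] using congrArg Units.val hunit

theorem forall_zpow_eq_iff [Fintype F] {m n : ℤ} (hm : m ≠ 0) (hn : n ≠ 0) :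
    (∀ x : F, x ^ m = x ^ n) ↔ m ≡ n [ZMOD Fintype.card F - 1] := by
  constructor
  · intro h
    obtain ⟨g, hg⟩ := IsCyclic.exists_ofOrder_eq_natCard (α := Fˣ)
    rw [← card_units_eq_card_sub_one, ← hg, ← zpow_eq_zpow_iff_modEq, ← Units.val_inj,
      Units.val_zpow_eq_zpow_val, Units.val_zpow_eq_zpow_val, h]
  · intro h x
    rcases eq_or_ne x 0 with rfl | hx
    · rw [zero_zpow m hm, zero_zpow n hn]
    · exact zpow_eq_zpow_of_modEq h hx

theorem IsAdditiveExponent.exists_zpow_eq [Finite F] (p : ℕ) [Fact p.Prime] [CharP F p] {d : ℤ}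
    (hd : IsAdditiveExponent F d) : ∃ j : ℕ, ∀ x : F, x ^ d = x ^ ((p : ℤ) ^ j) := by
  let φ : F →+* F :=
    { toFun x := x ^ d
      map_zero' := zero_zpow d hd.ne_zero
      map_one' := one_zpow d
      map_add' := hd
      map_mul' x y := mul_zpow x y d }
  let := ZMod.algebra F p
  let φ' : F →ₐ[ZMod p] F := { φ with
    commutes' c := RingHom.congr_fun
      (Subsingleton.elim (φ.comp (algebraMap (ZMod p) F)) (algebraMap (ZMod p) F)) c }
  obtain ⟨j, hj⟩ := FiniteField.exists_forall_apply_eq_pow (ZMod p) p F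
    (AlgEquiv.ofBijective φ' (Finite.injective_iff_bijective.mp φ'.injective))
  refine ⟨j, fun x ↦ (hj x).trans ?_⟩
  rw [Nat.card_zmod, ← Nat.cast_pow, zpow_natCast]

theorem isDegenerate_iff [Fintype F] (p : ℕ) [Fact p.Prime] [CharP F p] {d : ℤ} (hd : d ≠ 0) :
    IsDegenerate p (Fintype.card F) d ↔ IsAdditiveExponent F d := by
  have hp (j : ℕ) : (p : ℤ) ^ j ≠ 0 :=
    pow_ne_zero j (Nat.cast_ne_zero.mpr (Fact.out : p.Prime).ne_zero)
  constructor
  · rintro ⟨j, hj⟩ x y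
    have hfrob := (forall_zpow_eq_iff (F := F) hd (hp j)).mpr hj
    rw [hfrob, hfrob, hfrob, ← Nat.cast_pow, zpow_natCast, zpow_natCast, zpow_natCast,
      add_pow_char_pow]
  · intro hadd
    obtain ⟨j, hj⟩ := hadd.exists_zpow_eq p
    exact ⟨j, (forall_zpow_eq_iff hd (hp j)).mp hj⟩

theorem zpow_bijective_of_gcd_eq_one [Fintype F] {d : ℤ} (hd0 : d ≠ 0)
    (hd : Int.gcd d (Fintype.card F - 1) = 1) : Function.Bijective fun x : F ↦ x ^ d := by
  obtain ⟨u, v, huv⟩ := Int.isCoprime_iff_gcd_eq_one.mpr hd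
  have hu : d * u ≡ 1 [ZMOD Fintype.card F - 1] :=
    Int.modEq_iff_dvd.mpr ⟨v, by linear_combination -huv⟩
  have hleft {x : F} (hx : x ≠ 0) : (x ^ d) ^ u = x := by
    rw [← zpow_mul, zpow_eq_zpow_of_modEq hu hx, zpow_one]
  refine Finite.injective_iff_bijective.mp fun x y (hxy : x ^ d = y ^ d) ↦ ?_
  rcases eq_or_ne x 0 with rfl | hx
  · rw [zero_zpow d hd0, eq_comm, zpow_eq_zero_iff hd0] at hxy
    exact hxy.symm
  rcases eq_or_ne y 0 with rfl | hy
  · rwa [zero_zpow d hd0, zpow_eq_zero_iff hd0] at hxy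
  rw [← hleft hx, hxy, hleft hy]

end Degeneracy

section Niho

variable {F R : Type*} [Field F] [CommRing R] {I : Type*} [Field I] [Algebra I F]

/-- The restriction of `x ↦ ψ (x ^ d + a * x)` to the line `I z`, which is an additive character
of `I` when `x ↦ x ^ d` is additive on `I`. -/
def lineChar (ψ : AddChar F R) {d : ℤ} (hd : IsAdditiveExponent I d) (a z : F) : AddChar I R where
  toFun y := ψ ((y • z) ^ d + a * (y • z))
  map_zero_eq_one' := by
    rw [zero_smul, zero_zpow d hd.ne_zero, mul_zero, add_zero, AddChar.map_zero_eq_one]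
  map_add_eq_mul' y y' := by
    have hpow : ((y + y') • z) ^ d = (y • z) ^ d + (y' • z) ^ d := by
      simp only [Algebra.smul_def, mul_zpow, ← map_zpow₀]
      rw [hd, map_add, add_mul]
    rw [← AddChar.map_add_eq_mul, hpow, add_smul, mul_add, add_add_add_comm]

theorem lineChar_apply (ψ : AddChar F R) {d : ℤ} (hd : IsAdditiveExponent I d) (a z : F) (y : I) :
    lineChar ψ hd a z y = ψ ((y • z) ^ d + a * (y • z)) := rfl

theorem sum_lineChar [Fintype F] (ψ : AddChar F R) {d : ℤ} (hd : IsAdditiveExponent I d) (a : F)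
    (y : I) : ∑ z, lineChar ψ hd a z y =
      if y = 0 then (Fintype.card F : R) else charWeilSum ψ d a := by
  split_ifs with hy
  · simp only [hy, AddChar.map_zero_eq_one, Finset.sum_const, Finset.card_univ, nsmul_eq_mul,
      mul_one]
  · exact (MulAction.bijective₀ hy).sum_comp fun x ↦ ψ (x ^ d + a * x)

theorem sub_one_mul_charWeilSum_add [Fintype F] [Fintype I] [IsDomain R] (ψ : AddChar F R) {d : ℤ}
    (hd : IsAdditiveExponent I d) (a : F) :
    (Fintype.card I - 1) * charWeilSum ψ d a + Fintype.card F =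
      Fintype.card I * (Finset.univ.filter fun z ↦ lineChar ψ hd a z = 1).card := by
  have hlines : ∑ z, ∑ y, lineChar ψ hd a z y =
      Fintype.card I * (Finset.univ.filter fun z ↦ lineChar ψ hd a z = 1).card := by
    have hline (z : F) : ∑ y, lineChar ψ hd a z y =
        if lineChar ψ hd a z = 1 then (Fintype.card I : R) else 0 := by
      split_ifs with h
      · exact AddChar.sum_eq_card_of_eq_one h
      · exact AddChar.sum_eq_zero_of_ne_one h
    simp only [hline, ← Finset.sum_filter, Finset.sum_const, nsmul_eq_mul, mul_comm]
  rw [← hlines, Finset.sum_comm, Fintype.sum_eq_add_sum_compl 0, sum_lineChar, if_pos rfl, add_comm,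
    Finset.sum_congr rfl fun y hy ↦ by rw [sum_lineChar, if_neg (by simpa using hy)],
    Finset.sum_const, Finset.card_compl, Finset.card_singleton, nsmul_eq_mul,
    Nat.cast_pred Fintype.card_pos]

theorem lineChar_smul (ψ : AddChar F R) {d : ℤ} (hd : IsAdditiveExponent I d) (a z : F) (c : I) :
    lineChar ψ hd a (c • z) = (lineChar ψ hd a z).mulShift c := by
  ext y
  rw [AddChar.mulShift_apply, lineChar_apply, lineChar_apply, smul_smul, mul_comm]

open scoped ComplexOrder in
/-- Niho's evaluation: the support of the trivial line characters is a union of lines through the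
origin. -/
theorem charWeilSum_eq_neg_card_or_nonneg [Fintype F] [Fintype I]
    (hcard : Fintype.card F = Fintype.card I ^ 2) (ψ : AddChar F ℂ) {d : ℤ}
    (hd : IsAdditiveExponent I d) (a : F) :
    charWeilSum ψ d a = -Fintype.card I ∨ 0 ≤ charWeilSum ψ d a := by
  set T := Finset.univ.filter fun z ↦ lineChar ψ hd a z = 1
  set r := Fintype.card I
  have hcount : (r - 1) * charWeilSum ψ d a = r * (T.card - r) := by
    rw [mul_sub, ← sub_one_mul_charWeilSum_add ψ hd a, hcard]
    push_cast
    ring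
  have hr : (0 : ℝ) < r - 1 := sub_pos.mpr (Nat.one_lt_cast.mpr Fintype.one_lt_card)
  have hW : charWeilSum ψ d a = (r * (T.card - r) / (r - 1) : ℝ) := by
    push_cast
    rw [← hcount, mul_div_cancel_left₀ _ (mod_cast hr.ne')]
  have hzero : (0 : F) ∈ T := by
    rw [Finset.mem_filter_univ, ← zero_smul I (0 : F), lineChar_smul, AddChar.mulShift_zero]
  by_cases hT : T = {0}
  · left
    rw [hW, hT, Finset.card_singleton, Nat.cast_one, ← neg_sub, mul_neg, neg_div,
      mul_div_cancel_right₀ _ hr.ne', Complex.ofReal_neg, Complex.ofReal_natCast]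
  · right
    obtain ⟨z, hz, hz0⟩ : ∃ z ∈ T, z ≠ 0 := by
      by_contra! h
      exact hT (Finset.eq_singleton_iff_unique_mem.mpr ⟨hzero, h⟩)
    have hle : r ≤ T.card := by
      refine Finset.card_le_card_of_injOn (· • z) (fun c _ ↦ ?_) (smul_left_injective I hz0).injOn
      rw [Finset.mem_coe, Finset.mem_filter_univ] at *
      rw [lineChar_smul, hz, AddChar.ext_iff]
      exact fun _ ↦ rfl
    rw [hW, Complex.zero_le_real]
    exact div_nonneg (mul_nonneg (Nat.cast_nonneg _) (sub_nonneg.mpr (Nat.cast_le.mpr hle))) hr.le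

end Niho

section Nonnegativity

variable {F : Type*} [Field F] [Fintype F]

theorem charWeilSum_inv (ψ : AddChar F ℂ) (d : ℤ) (a : F) :
    charWeilSum ψ⁻¹ d a = starRingEnd ℂ (charWeilSum ψ d a) := by
  simp only [charWeilSum, map_sum, AddChar.inv_apply, AddChar.map_neg_eq_conj]

theorem norm_charWeilSum_le (ψ : AddChar F ℂ) (d : ℤ) (a : F) :
    ‖charWeilSum ψ d a‖ ≤ Fintype.card F :=
  (norm_sum_le _ _).trans_eq <| by
    simp only [AddChar.norm_apply, Finset.sum_const, Finset.card_univ, nsmul_eq_mul, mul_one]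

theorem sum_norm_charWeilSum_sq {ψ : AddChar F ℂ} (hψ : ψ ≠ 1) (d : ℤ) :
    ∑ a, ‖charWeilSum ψ d a‖ ^ 2 = (Fintype.card F : ℝ) ^ 2 := by
  have hsq := sum_charWeilSum_mul_charWeilSum_inv hψ d
  simp only [charWeilSum_inv, Complex.mul_conj'] at hsq
  exact_mod_cast hsq

open scoped ComplexOrder in
theorem exists_charWeilSum_eq_card {ψ : AddChar F ℂ} (hψ : ψ ≠ 1) {d : ℤ} (hd : d ≠ 0)
    (hnonneg : ∀ a, 0 ≤ charWeilSum ψ d a) : ∃ a, charWeilSum ψ d a = Fintype.card F := by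
  have hnorm (a : F) : (‖charWeilSum ψ d a‖ : ℂ) = charWeilSum ψ d a :=
    (Complex.eq_coe_norm_of_nonneg (hnonneg a)).symm
  have hsum : ∑ a, ‖charWeilSum ψ d a‖ = Fintype.card F := by
    refine Complex.ofReal_injective ?_
    simp only [Complex.ofReal_sum, hnorm, sum_charWeilSum hψ hd, Complex.ofReal_natCast]
  have hzero : ∑ a, ‖charWeilSum ψ d a‖ * (Fintype.card F - ‖charWeilSum ψ d a‖) = 0 := by
    simp only [mul_sub, Finset.sum_sub_distrib, ← Finset.sum_mul, hsum, ← sq,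
      sum_norm_charWeilSum_sq hψ, sub_self]
  rw [Finset.sum_eq_zero_iff_of_nonneg fun a _ ↦
    mul_nonneg (norm_nonneg _) (sub_nonneg.mpr (norm_charWeilSum_le ψ d a))] at hzero
  obtain ⟨a, -, ha⟩ := Finset.exists_ne_zero_of_sum_ne_zero
    (hsum.trans_ne (Nat.cast_ne_zero.mpr Fintype.card_ne_zero))
  have hcard := (mul_eq_zero.mp (hzero a (Finset.mem_univ a))).resolve_left ha
  exact ⟨a, by rw [← hnorm, ← sub_eq_zero.mp hcard, Complex.ofReal_natCast]⟩

theorem addChar_eq_one_of_charWeilSum_eq_card {ψ : AddChar F ℂ} {d : ℤ} {a : F}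
    (h : charWeilSum ψ d a = Fintype.card F) (x : F) : ψ (x ^ d + a * x) = 1 := by
  have hle (x : F) : (ψ (x ^ d + a * x)).re ≤ 1 :=
    (Complex.re_le_norm _).trans_eq (AddChar.norm_apply ψ _)
  have hsum : ∑ x, (ψ (x ^ d + a * x)).re = ∑ _x : F, (1 : ℝ) := by
    rw [← Complex.re_sum, Finset.sum_const, Finset.card_univ, nsmul_eq_mul, mul_one,
      ← Complex.natCast_re, ← h, charWeilSum]
  have hre := (Finset.sum_eq_sum_iff_of_le fun x _ ↦ hle x).mp hsum x (Finset.mem_univ x)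
  have hpos := Complex.re_eq_norm.mp (hre.trans (AddChar.norm_apply ψ _).symm)
  rw [Complex.eq_coe_norm_of_nonneg hpos, AddChar.norm_apply, Complex.ofReal_one]

open scoped ComplexOrder in
theorem isAdditiveExponent_of_forall_charWeilSum_nonneg {ψ : AddChar F ℂ} (hψ : ψ ≠ 1) {d : ℤ}
    (hd : Function.Bijective fun x : F ↦ x ^ d) (hnonneg : ∀ a, 0 ≤ charWeilSum ψ d a) :
    IsAdditiveExponent F d := by
  obtain ⟨a, ha⟩ := exists_charWeilSum_eq_card hψ (ne_zero_of_zpow_injective hd.1) hnonneg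
  have hone := addChar_eq_one_of_charWeilSum_eq_card ha
  refine fun x y ↦ sub_eq_zero.mp <| by_contra fun hu ↦
    AddChar.IsPrimitive.of_ne_one hψ hu ?_
  ext b
  obtain ⟨c, rfl⟩ := hd.2 b
  have hdecomp : ((x + y) ^ d - (x ^ d + y ^ d)) * c ^ d =
      ((c * (x + y)) ^ d + a * (c * (x + y))) -
        (((c * x) ^ d + a * (c * x)) + ((c * y) ^ d + a * (c * y))) := by
    simp only [mul_zpow]
    ring
  rw [AddChar.mulShift_apply, hdecomp, AddChar.map_sub_eq_div, hone, AddChar.map_add_eq_mul,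
    hone, hone, mul_one, div_one, AddChar.one_apply]

theorem exists_charWeilSum_eq_neg_card {I : Type*} [Field I] [Fintype I] [Algebra I F]
    (hcard : Fintype.card F = Fintype.card I ^ 2) {ψ : AddChar F ℂ} (hψ : ψ ≠ 1) {d : ℤ}
    (hd : Function.Bijective fun x : F ↦ x ^ d) (hI : IsAdditiveExponent I d)
    (hF : ¬ IsAdditiveExponent F d) : ∃ a, charWeilSum ψ d a = -Fintype.card I := by
  by_contra! hne
  exact hF <| isAdditiveExponent_of_forall_charWeilSum_nonneg hψ hd fun a ↦
    (charWeilSum_eq_neg_card_or_nonneg hcard ψ hI a).resolve_left (hne a)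

end Nonnegativity

section ChangeOfCharacter

variable {F : Type*} [Field F]

theorem exists_mulShift_eq [Finite F] {φ : AddChar F ℂ} (hφ : φ ≠ 1) (ψ : AddChar F ℂ) :
    ∃ c, φ.mulShift c = ψ := by
  have := Fintype.ofFinite F
  exact ((Fintype.bijective_iff_injective_and_card _).mpr
    ⟨AddChar.to_mulShift_inj_of_isPrimitive (AddChar.IsPrimitive.of_ne_one hφ),
      AddChar.card_eq.symm⟩).2 ψ

theorem charWeilSum_mulShift_zpow [Fintype F] {R : Type*} [CommRing R] (φ : AddChar F R) (d : ℤ)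
    {b : F} (hb : b ≠ 0) (a : F) :
    charWeilSum (φ.mulShift (b ^ d)) d (b * a) = charWeilSum φ d (b ^ d * a) := by
  simp only [charWeilSum]
  rw [← (mulLeft_bijective₀ b hb).sum_comp fun x ↦ φ (x ^ d + b ^ d * a * x)]
  refine Finset.sum_congr rfl fun x _ ↦ ?_
  rw [AddChar.mulShift_apply, mul_zpow]
  exact congrArg φ (by ring)

theorem forall_charWeilSum_mem_of_ne_one [Fintype F] {φ ψ : AddChar F ℂ} (hφ : φ ≠ 1) (hψ : ψ ≠ 1)
    {d : ℤ} (hd : Function.Bijective fun x : F ↦ x ^ d) {S : Set ℂ}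
    (hS : ∀ a ≠ 0, charWeilSum ψ d a ∈ S) : ∀ a ≠ 0, charWeilSum φ d a ∈ S := by
  obtain ⟨c, rfl⟩ := exists_mulShift_eq hφ ψ
  obtain ⟨b, rfl⟩ := hd.2 c
  have hb : b ≠ 0 := by
    rintro rfl
    exact hψ (by simp [zero_zpow d (ne_zero_of_zpow_injective hd.1)])
  intro a ha
  have hbd : b ^ d ≠ 0 := zpow_ne_zero d hb
  rw [← mul_div_cancel₀ a hbd, ← charWeilSum_mulShift_zpow φ d hb]
  exact hS _ (mul_ne_zero hb (div_ne_zero ha hbd))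

theorem zpow_bijective_of_algebra {J K : Type*} [Field J] [Finite J] [Field K] [Algebra J K]
    {d : ℤ} (hd : Function.Injective fun x : K ↦ x ^ d) :
    Function.Bijective fun x : J ↦ x ^ d := by
  refine Finite.injective_iff_bijective.mp fun x y (hxy : x ^ d = y ^ d) ↦
    (algebraMap J K).injective (hd ?_)
  beta_reduce
  rw [← map_zpow₀, hxy, map_zpow₀]

end ChangeOfCharacter

section ThreeValued

variable {F : Type*} [Field F]

theorem isIntegral_addChar_apply [Finite F] (ψ : AddChar F ℂ) (x : F) : IsIntegral ℤ (ψ x) := by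
  have := Fintype.ofFinite F
  refine IsIntegral.of_pow (Fintype.card_pos (α := F)) ?_
  rw [← AddChar.map_nsmul_eq_pow, card_nsmul_eq_zero, AddChar.map_zero_eq_one]
  exact isIntegral_one

theorem isIntegral_mulChar_apply [Finite F] (χ : MulChar F ℂ) (x : F) : IsIntegral ℤ (χ x) := by
  rcases eq_or_ne x 0 with rfl | hx
  · rw [MulChar.map_zero]
    exact isIntegral_zero
  · have := Fintype.ofFinite F
    refine IsIntegral.of_pow (Nat.sub_pos_of_lt (Fintype.one_lt_card (α := F))) ?_
    rw [← map_pow, FiniteField.pow_card_sub_one_eq_one x hx, map_one]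
    exact isIntegral_one

theorem isIntegral_charWeilSum [Fintype F] (ψ : AddChar F ℂ) (d : ℤ) (a : F) :
    IsIntegral ℤ (charWeilSum ψ d a) :=
  IsIntegral.sum _ fun _ _ ↦ isIntegral_addChar_apply ψ _

theorem prime_mul_prime_pow_dvd_sq {p : ℤ} (hp : Prime p) (hp0 : 0 < p) {n : ℕ} {α N : ℤ}
    (hα : α ∣ p ^ n) (hsq : α ^ 2 * N = (p ^ n) ^ 2) (hN : N < p ^ n) : p * p ^ n ∣ α ^ 2 := by
  obtain ⟨k, -, hk⟩ := (dvd_prime_pow hp n).mp hα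
  have hαk : α ^ 2 = p ^ (2 * k) := by
    rw [mul_comm, pow_mul, sq_eq_sq_iff_eq_or_eq_neg]
    exact Int.associated_iff.mp hk
  rw [hαk, ← pow_succ']
  refine pow_dvd_pow p (Nat.lt_of_not_le fun hle ↦ ?_)
  have hlt : p ^ (2 * k) * N < p ^ n * p ^ n := calc
    p ^ (2 * k) * N < p ^ (2 * k) * p ^ n := by gcongr
    _ ≤ p ^ n * p ^ n := by gcongr
  rw [← hαk, hsq, sq] at hlt
  exact lt_irrefl _ hlt

theorem exists_intCast_mul_of_mem_neg_zero_self {f : F → ℂ} (hf : f 0 = 0) {A : ℂ}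
    (hA : ∀ a ≠ 0, f a ∈ ({-A, 0, A} : Set ℂ)) :
    ∃ s : F → ℤ, (∀ a, f a = A * s a) ∧ (∀ a, s a ^ 2 ≤ 1) ∧ s 0 = 0 := by
  have hs (a : F) : ∃ s : ℤ, f a = A * s ∧ s ^ 2 ≤ 1 ∧ (a = 0 → s = 0) := by
    rcases eq_or_ne a 0 with rfl | ha
    · exact ⟨0, by simp [hf]⟩
    · rcases hA a ha with h | h | h
      · exact ⟨-1, by simp [h, ha]⟩
      · exact ⟨0, by simp [h]⟩
      · exact ⟨1, by simp_all⟩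
  choose s hs using hs
  exact ⟨s, fun a ↦ (hs a).1, fun a ↦ (hs a).2.1, (hs 0).2.2 rfl⟩

theorem exists_int_of_charWeilSum_eq_mul [Fintype F] {ψ : AddChar F ℂ} (hψ : ψ ≠ 1) {d : ℤ}
    (hd : d ≠ 0) {A : ℂ} {s : F → ℤ} (hs : ∀ a, charWeilSum ψ d a = A * s a)
    (hs1 : ∀ a, s a ^ 2 ≤ 1) :
    ∃ α : ℤ, A = α ∧ α * ∑ a, s a = Fintype.card F := by
  have hsum : A * (∑ a, s a : ℤ) = Fintype.card F := by
    rw [Int.cast_sum, Finset.mul_sum, ← sum_charWeilSum hψ hd]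
    exact Finset.sum_congr rfl fun a _ ↦ (hs a).symm
  have hs0 : ∑ a, s a ≠ 0 := by
    intro h
    rw [h, Int.cast_zero, mul_zero, eq_comm, Nat.cast_eq_zero] at hsum
    exact Fintype.card_ne_zero hsum
  obtain ⟨a, -, ha⟩ := Finset.exists_ne_zero_of_sum_ne_zero hs0
  have hsa : s a ^ 2 = 1 := le_antisymm (hs1 a) (Int.add_one_le_iff.mpr (sq_pos_of_ne_zero ha))
  have hA : A = charWeilSum ψ d a * s a := by
    rw [hs, mul_assoc, ← sq, ← Int.cast_pow, hsa, Int.cast_one, mul_one]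
  have hint : IsIntegral ℤ A := by
    rw [hA]
    exact (isIntegral_charWeilSum ψ d a).mul (isIntegral_algebraMap (x := s a))
  have hrat : A = (Fintype.card F / (∑ a, s a : ℤ) : ℚ) := by
    rw [eq_div_of_mul_eq (Int.cast_ne_zero.mpr hs0) hsum]
    norm_cast
  obtain ⟨α, rfl⟩ := hint.exists_int_iff_exists_rat.mp ⟨_, hrat⟩
  exact ⟨α, rfl, mod_cast hsum⟩

theorem exists_int_dvd_charWeilSum [Fintype F] (p : ℕ) [Fact p.Prime] [CharP F p]
    {ψ : AddChar F ℂ} (hψ : ψ ≠ 1) {d : ℤ} (hd : Function.Bijective fun x : F ↦ x ^ d) {A : ℂ}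
    (hA : ∀ a ≠ 0, charWeilSum ψ d a ∈ ({-A, 0, A} : Set ℂ)) :
    ∃ α : ℤ, (p * Fintype.card F : ℤ) ∣ α ^ 2 ∧
      ∃ s : F → ℤ, ∀ a, charWeilSum ψ d a = α * s a := by
  obtain ⟨s, hs, hs1, hs0⟩ := exists_intCast_mul_of_mem_neg_zero_self (charWeilSum_zero hψ hd) hA
  obtain ⟨α, rfl, hα⟩ :=
    exists_int_of_charWeilSum_eq_mul hψ (ne_zero_of_zpow_injective hd.1) hs hs1
  have hsq : α ^ 2 * ∑ a, s a ^ 2 = (Fintype.card F : ℤ) ^ 2 := by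
    have h := sum_norm_charWeilSum_sq hψ d
    simp only [hs, norm_mul, Complex.norm_intCast, mul_pow, sq_abs, ← Finset.mul_sum] at h
    exact_mod_cast h
  have hlt : ∑ a, s a ^ 2 < (Fintype.card F : ℤ) := by
    refine (Finset.sum_lt_sum (g := fun _ ↦ 1) (fun a _ ↦ hs1 a)
      ⟨0, Finset.mem_univ 0, by simp [hs0]⟩).trans_eq ?_
    rw [Finset.sum_const, Finset.card_univ, nsmul_one]
  obtain ⟨n, hp, hn⟩ := FiniteField.card F p
  refine ⟨α, ?_, s, hs⟩
  rw [hn, Nat.cast_pow] at hα hsq hlt ⊢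
  exact prime_mul_prime_pow_dvd_sq (Nat.prime_iff_prime_int.mp hp) (mod_cast hp.pos)
    (Dvd.intro _ hα) hsq hlt

end ThreeValued

section PrimeRadical

/-- The radical of `(p)` in the ring of all algebraic integers, viewed inside `ℂ` so that its
elements can be reached through divisions in `ℂ`. -/
noncomputable def primeRadical (p : ℕ) : Submodule (integralClosure ℤ ℂ) ℂ :=
  Submodule.map (Algebra.linearMap _ ℂ) (Ideal.span {(p : integralClosure ℤ ℂ)}).radical

theorem mem_primeRadical {p : ℕ} {z : ℂ} :
    z ∈ primeRadical p ↔ ∃ m ≠ 0, ∃ c, IsIntegral ℤ c ∧ z ^ m = p * c := by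
  constructor
  · rintro ⟨z, ⟨m, hm⟩, rfl⟩
    obtain ⟨c, hc⟩ := Ideal.mem_span_singleton.mp (Ideal.mul_mem_left _ z hm)
    refine ⟨m + 1, m.succ_ne_zero, c, c.2, ?_⟩
    rw [pow_succ']
    exact congrArg Subtype.val hc
  · rintro ⟨m, hm, c, hc, hz⟩
    have hint : IsIntegral ℤ z := by
      refine IsIntegral.of_pow (Nat.pos_of_ne_zero hm) ?_
      rw [hz]
      exact (isIntegral_algebraMap (x := (p : ℤ))).mul hc
    exact ⟨⟨z, hint⟩, ⟨m, Ideal.mem_span_singleton.mpr ⟨⟨c, hc⟩, Subtype.ext hz⟩⟩, rfl⟩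

theorem mul_mem_primeRadical {p : ℕ} {c z : ℂ} (hc : IsIntegral ℤ c) (hz : z ∈ primeRadical p) :
    c * z ∈ primeRadical p :=
  (primeRadical p).smul_mem (⟨c, hc⟩ : integralClosure ℤ ℂ) hz

theorem natCast_mem_primeRadical {p n : ℕ} (h : p ∣ n) : (n : ℂ) ∈ primeRadical p := by
  obtain ⟨k, rfl⟩ := h
  exact mem_primeRadical.mpr
    ⟨1, one_ne_zero, k, isIntegral_algebraMap (x := (k : ℤ)), by rw [pow_one, Nat.cast_mul]⟩

theorem one_notMem_primeRadical {p : ℕ} (hp : p.Prime) : (1 : ℂ) ∉ primeRadical p := by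
  intro h
  obtain ⟨m, -, c, hc, h⟩ := mem_primeRadical.mp h
  rw [one_pow] at h
  obtain ⟨k, rfl⟩ := hc.exists_int_iff_exists_rat.mp
    ⟨(p : ℚ)⁻¹, by rw [Rat.cast_inv, Rat.cast_natCast, eq_inv_of_mul_eq_one_right h.symm]⟩
  exact (Nat.prime_iff_prime_int.mp hp).not_isUnit (.of_mul_eq_one k (mod_cast h.symm))

end PrimeRadical

section Tower

variable {J : Type*} [Field J] [Fintype J]

theorem mul_mem_primeRadical_of_forall_mulChar {p : ℕ} {f : J → ℂ}
    (hf : ∀ χ : MulChar J ℂ, ∑ b, χ b * f b ∈ primeRadical p) {a : J} (ha : a ≠ 0) :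
    (Nat.card Jˣ : ℂ) * f a ∈ primeRadical p := by
  have := Fintype.ofFinite (MulChar J ℂ)
  rw [← mulChar_fourier_inversion f ha]
  exact sum_mem fun χ _ ↦ mul_mem_primeRadical (isIntegral_mulChar_apply χ _) (hf χ)

theorem mulChar_sum_div_mem_primeRadical {K : Type*} [Field K] [Fintype K] [Algebra J K] (p : ℕ)
    [Fact p.Prime] [CharP K p] {ψ : AddChar J ℂ} (hψ : ψ ≠ 1) {d : ℤ}
    (hd : Function.Bijective fun x : K ↦ x ^ d) {A : ℂ}
    (hA : ∀ a ≠ 0, charWeilSum (traceLift K ψ) d a ∈ ({-A, 0, A} : Set ℂ)) {r : ℕ}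
    (hr : Fintype.card J = r ^ 2) (χ : MulChar J ℂ) :
    ∑ b, χ b * (charWeilSum ψ d b / r) ∈ primeRadical p := by
  obtain ⟨α, ⟨c, hc⟩, s, hs⟩ := exists_int_dvd_charWeilSum p (traceLift_ne_one hψ) hd hA
  set n := Module.finrank J K
  have hcard : (Fintype.card K : ℂ) = (r ^ n) ^ 2 := by
    rw [Module.card_eq_pow_finrank (K := J) (V := K), hr, Nat.cast_pow, Nat.cast_pow, ← pow_mul,
      ← pow_mul, mul_comm]
  have hα : (α : ℂ) ^ 2 = p * Fintype.card K * c := mod_cast hc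
  have hr0 : (r : ℂ) ^ n ≠ 0 := by
    rw [← sq_eq_zero_iff.ne, ← hcard]
    exact Nat.cast_ne_zero.mpr Fintype.card_ne_zero
  have hlift : α * ∑ b, normLift K χ b * s b = (∑ b, χ b * charWeilSum ψ d b) ^ n := by
    rw [← sum_normLift_mul_charWeilSum_traceLift hψ (zpow_bijective_of_algebra hd.1) hd,
      Finset.mul_sum]
    exact Finset.sum_congr rfl fun b _ ↦ by rw [hs, mul_left_comm]
  refine mem_primeRadical.mpr ⟨n * 2, mul_ne_zero Module.finrank_pos.ne' two_ne_zero,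
    c * (∑ b, normLift K χ b * s b) ^ 2, ?_, ?_⟩
  · exact (isIntegral_algebraMap (x := c)).mul <| .pow (.sum _ fun b _ ↦
      (isIntegral_mulChar_apply _ b).mul (isIntegral_algebraMap (x := s b))) 2
  · simp only [← mul_div_assoc, ← Finset.sum_div]
    rw [div_pow, pow_mul, ← hlift, mul_pow, hα, hcard, pow_mul]
    field_simp

theorem not_forall_charWeilSum_traceLift_mem {I K : Type*} [Field I] [Fintype I] [Algebra I J]
    [Field K] [Fintype K] [Algebra J K] (p : ℕ) [Fact p.Prime] [CharP K p]
    (hIJ : Fintype.card J = Fintype.card I ^ 2) {ψ : AddChar J ℂ} (hψ : ψ ≠ 1) {d : ℤ}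
    (hd : Function.Bijective fun x : K ↦ x ^ d) (hI : IsAdditiveExponent I d)
    (hJ : ¬ IsAdditiveExponent J d) (A : ℂ) :
    ¬ ∀ a ≠ 0, charWeilSum (traceLift K ψ) d a ∈ ({-A, 0, A} : Set ℂ) := by
  intro hA
  have hdJ : Function.Bijective fun x : J ↦ x ^ d := zpow_bijective_of_algebra hd.1
  obtain ⟨a, ha⟩ := exists_charWeilSum_eq_neg_card hIJ hψ hdJ hI hJ
  have hI0 : (Fintype.card I : ℂ) ≠ 0 := Nat.cast_ne_zero.mpr Fintype.card_ne_zero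
  have ha0 : a ≠ 0 := by
    rintro rfl
    rw [charWeilSum_zero hψ hdJ, zero_eq_neg] at ha
    exact hI0 ha
  have hmem := mul_mem_primeRadical_of_forall_mulChar
    (mulChar_sum_div_mem_primeRadical p hψ hd hA hIJ) ha0
  have hcard : (Nat.card Jˣ : ℂ) = Fintype.card J - 1 := mod_cast card_units_eq_card_sub_one
  have hp : p ∣ Fintype.card J := by
    have : CharP J p := (algebraMap J K).charP (algebraMap J K).injective p
    exact (CharP.cast_eq_zero_iff J p _).mp (Nat.cast_card_eq_zero J)
  rw [ha, neg_div, div_self hI0, mul_neg_one, hcard, neg_sub] at hmem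
  refine one_notMem_primeRadical Fact.out ((Submodule.sub_mem_iff_left _ ?_).mp hmem)
  exact natCast_mem_primeRadical hp

end Tower

theorem weilSum_eq_charWeilSum (p : ℕ) [Fact p.Prime] (K : Type) [Field K] [Fintype K]
    [Algebra (ZMod p) K] (d : ℤ) (a : K) :
    weilSum p K d a = charWeilSum (traceLift K (ZMod.stdAddChar (N := p))) d a := by
  refine Finset.sum_congr rfl fun x _ ↦ ?_
  rw [canonicalAddChar, traceLift_apply, ← Int.cast_natCast (R := ℂ), ← ZMod.stdAddChar_coe,
    Int.cast_natCast, ZMod.natCast_zmod_val]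

theorem traceLift_stdAddChar_ne_one (p : ℕ) [Fact p.Prime] (K : Type*) [Field K] [Finite K]
    [Algebra (ZMod p) K] : traceLift K (ZMod.stdAddChar (N := p)) ≠ 1 :=
  traceLift_ne_one <| AddChar.ne_one_iff.mpr
    ⟨1, fun h ↦ one_ne_zero (ZMod.injective_stdAddChar (h.trans (AddChar.map_zero_eq_one _).symm))⟩

theorem ne_zero_of_gcd_card_sub_one {K : Type*} [Field K] [Fintype K] {I J : Subfield K}
    (hJI : Nat.card J = Nat.card I ^ 2) {d : ℤ} (hd : Int.gcd d (Fintype.card K - 1) = 1) :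
    d ≠ 0 := by
  rintro rfl
  have hI : 1 < Nat.card I := Finite.one_lt_card
  have hJ : Nat.card J ≤ Fintype.card K :=
    (Nat.card_le_card_of_injective _ J.subtype_injective).trans_eq Nat.card_eq_fintype_card
  rw [Int.gcd_zero_left] at hd
  have : 2 ^ 2 ≤ Nat.card I ^ 2 := by gcongr; exact hI
  omega

theorem stmt3_general (p : ℕ) [Fact p.Prime] {K : Type*} [Field K] [Fintype K] [CharP K p]
    {ψ : AddChar K ℂ} (hψ : ψ ≠ 1) (d : ℤ) (hd : Int.gcd d (Fintype.card K - 1) = 1)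
    (I J : Subfield K) (hIJ : I ≤ J) (hJI : Nat.card J = Nat.card I ^ 2)
    (hdegI : IsDegenerate p (Nat.card I) d) (hndJ : ¬ IsDegenerate p (Nat.card J) d) (A : ℂ) :
    ¬ ∀ a ≠ 0, charWeilSum ψ d a ∈ ({-A, 0, A} : Set ℂ) := by
  intro hA
  have hd0 := ne_zero_of_gcd_card_sub_one hJI hd
  have hbij : Function.Bijective fun x : K ↦ x ^ d := zpow_bijective_of_gcd_eq_one hd0 hd
  have : CharP I p := I.subtype.charP I.subtype_injective p
  have : CharP J p := J.subtype.charP J.subtype_injective p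
  let : Algebra I J := (Subfield.inclusion hIJ).toAlgebra
  rw [Nat.card_eq_fintype_card] at hdegI hndJ
  rw [Nat.card_eq_fintype_card, Nat.card_eq_fintype_card] at hJI
  rw [isDegenerate_iff p hd0] at hdegI hndJ
  obtain ⟨φ, hφ⟩ := AddChar.exists_apply_ne_zero.mpr (one_ne_zero (α := J))
  have hφ1 : φ ≠ 1 := AddChar.ne_one_iff.mpr ⟨1, hφ⟩
  exact not_forall_charWeilSum_traceLift_mem p hJI hφ1 hbij hdegI hndJ A
    (forall_charWeilSum_mem_of_ne_one (traceLift_ne_one hφ1) hψ hbij hA)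

theorem stmt3 (p : ℕ) [Fact p.Prime] (K : Type) [Field K] [Fintype K] [CharP K p]
    [Algebra (ZMod p) K]
    (d : ℤ) (hd : Int.gcd d ((Fintype.card K : ℤ) - 1) = 1)
    (I J : Subfield K) (hIJ : I ≤ J)
    (hJI : Nat.card J = Nat.card I ^ 2)
    (hdegI : IsDegenerate p (Nat.card I) d)
    (hndJ : ¬ IsDegenerate p (Nat.card J) d) :
    ¬ ∃ A : ℂ, weilValues p K d = {-A, 0, A} := by
  rintro ⟨A, hA⟩
  exact stmt3_general p (traceLift_stdAddChar_ne_one p K) d hd I J hIJ hJI hdegI hndJ A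
    fun a ha ↦ hA ▸ ⟨a, ha, weilSum_eq_charWeilSum p K d a⟩
end
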